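/- For every path connected topological space X there exists a quasi-isomorphism φ : (∧V,d) → A_PL(X) from a minimal Sullivan algebra; and if ψ : (∧W,d) → A_PL(X) is a second quasi-isomorphism from a minimal Sullivan algebra, then there is a cdga isomorphism χ : (∧W,d) → (∧V,d) such that φ∘χ is homotopic to ψ. -/

import Mathlib

/-! # Core definitions for rational homotopy theory via Sullivan models -/

noncomputable section

open scoped TensorProduct

/-- A commutative (in the graded sense) differential graded algebra over `ℚ`,
presented as a `ℤ`-graded algebra: a ring together with an internal grading by
`ℚ`-subspaces, graded commutativity with Koszul signs, and a degree `+1`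
differential which is a derivation and squares to zero. -/
structure CDGA : Type 1 where
  carrier : Type
  [ring : Ring carrier]
  [algebra : Algebra ℚ carrier]
  grading : ℤ → Submodule ℚ carrier
  spanning : (⨆ i, grading i) = ⊤
  indep : ∀ f : ℤ →₀ carrier, (∀ i, f i ∈ grading i) → (f.sum fun _ x => x) = 0 → f = 0
  one_mem : (1 : carrier) ∈ grading 0
  mul_mem : ∀ {i j : ℤ} {a b : carrier}, a ∈ grading i → b ∈ grading j → a * b ∈ grading (i + j)
  gcomm : ∀ {i j : ℤ} {a b : carrier}, a ∈ grading i → b ∈ grading j →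
    a * b = ((-1 : ℚ) ^ (i * j)) • (b * a)
  d : carrier →ₗ[ℚ] carrier
  d_mem : ∀ {i : ℤ} {a : carrier}, a ∈ grading i → d a ∈ grading (i + 1)
  d_sq : ∀ a, d (d a) = 0
  leibniz : ∀ {i : ℤ} {a : carrier}, a ∈ grading i → ∀ b : carrier,
    d (a * b) = d a * b + ((-1 : ℚ) ^ i) • (a * d b)

attribute [instance] CDGA.ring CDGA.algebra

namespace CDGA

/-- A morphism of cdga's: a ring homomorphism which is `ℚ`-linear, preserves the
grading and commutes with the differentials. -/
structure Hom (A B : CDGA) where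
  toFun : A.carrier →+* B.carrier
  map_smul : ∀ (q : ℚ) (x : A.carrier), toFun (q • x) = q • toFun x
  map_grading : ∀ i : ℤ, ∀ x ∈ A.grading i, toFun x ∈ B.grading i
  map_d : ∀ x, toFun (A.d x) = B.d (toFun x)

def Hom.id (A : CDGA) : Hom A A :=
  ⟨RingHom.id _, fun _ _ => rfl, fun _ _ h => h, fun _ => rfl⟩

def Hom.comp {A B C : CDGA} (g : Hom B C) (f : Hom A B) : Hom A C where
  toFun := g.toFun.comp f.toFun
  map_smul q x := by simp [RingHom.comp_apply, f.map_smul, g.map_smul]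
  map_grading i x hx := g.map_grading i _ (f.map_grading i x hx)
  map_d x := by simp [RingHom.comp_apply, f.map_d, g.map_d]

/-- An isomorphism of cdga's. -/
def IsIso {A B : CDGA} (f : Hom A B) : Prop :=
  ∃ g : Hom B A, (∀ x, g.toFun (f.toFun x) = x) ∧ ∀ y, f.toFun (g.toFun y) = y

def cocycles (A : CDGA) (n : ℤ) : Submodule ℚ A.carrier :=
  A.grading n ⊓ LinearMap.ker A.d

def cobounds (A : CDGA) (n : ℤ) : Submodule ℚ A.carrier :=
  A.grading n ⊓ LinearMap.range A.d

/-- The `n`-th cohomology of a cdga, as a `ℚ`-vector space. -/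
def H (A : CDGA) (n : ℤ) : Type :=
  A.cocycles n ⧸ ((A.cobounds n).comap (A.cocycles n).subtype)

instance (A : CDGA) (n : ℤ) : AddCommGroup (A.H n) :=
  inferInstanceAs (AddCommGroup (_ ⧸ _))

instance (A : CDGA) (n : ℤ) : Module ℚ (A.H n) :=
  inferInstanceAs (Module ℚ (_ ⧸ _))

/-- A quasi-isomorphism: a morphism inducing an isomorphism in cohomology
(expressed at the level of cocycles and coboundaries). -/
def QuasiIso {A B : CDGA} (f : Hom A B) : Prop :=
  (∀ n : ℤ, ∀ a ∈ A.cocycles n, f.toFun a ∈ B.cobounds n → a ∈ A.cobounds n) ∧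
  ∀ n : ℤ, ∀ b ∈ B.cocycles n, ∃ a ∈ A.cocycles n, b - f.toFun a ∈ B.cobounds n

/-- `H⁰(A) = ℚ`. -/
def HZeroIsQ (A : CDGA) : Prop :=
  (∀ a ∈ A.cocycles 0, ∃ q : ℚ, a - q • (1 : A.carrier) ∈ A.cobounds 0) ∧
  (1 : A.carrier) ∉ A.cobounds 0

/-- The cylinder `∧(t,dt) ⊗ A` on a cdga `A`, characterized (up to isomorphism)
as a cdga containing `A` and an element `t` of degree `0` such that the whole
algebra is a free `A`-module on the monomials `tᵏ` and `tᵏ·dt`, together with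
the two augmentations `ε₀, ε₁` evaluating `t` at `0` and `1`.  -/
structure Cylinder (A : CDGA) where
  C : CDGA
  ι : Hom A C
  t : C.carrier
  t_mem : t ∈ C.grading 0
  ε₀ : Hom C A
  ε₁ : Hom C A
  ε₀_ι : ∀ a, ε₀.toFun (ι.toFun a) = a
  ε₁_ι : ∀ a, ε₁.toFun (ι.toFun a) = a
  ε₀_t : ε₀.toFun t = 0
  ε₁_t : ε₁.toFun t = 1
  basis : ∀ c : C.carrier, ∃! pq : (ℕ →₀ A.carrier) × (ℕ →₀ A.carrier),
    c = (pq.1.sum fun k a => ι.toFun a * t ^ k) +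
        pq.2.sum fun k a => ι.toFun a * t ^ k * C.d t
  grading_compat : ∀ (n : ℤ) (p q : ℕ →₀ A.carrier),
    (∀ k, p k ∈ A.grading n) → (∀ k, q k ∈ A.grading (n - 1)) →
    ((p.sum fun k a => ι.toFun a * t ^ k) +
      q.sum fun k a => ι.toFun a * t ^ k * C.d t) ∈ C.grading n

/-- Sullivan's notion of homotopy of cdga morphisms: `f ∼ g` iff there is a
morphism into the cylinder `∧(t,dt) ⊗ A` restricting to `f` at `t = 0` and to
`g` at `t = 1`. -/
def Homotopic {S A : CDGA} (f g : Hom S A) : Prop :=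
  ∃ (cy : Cylinder A) (Φ : Hom S cy.C),
    (∀ x, cy.ε₀.toFun (Φ.toFun x) = f.toFun x) ∧ ∀ x, cy.ε₁.toFun (Φ.toFun x) = g.toFun x

def QIso (A B : CDGA) : Prop := ∃ f : Hom A B, QuasiIso f

/-- Weak equivalence of cdga's: a zig-zag of quasi-isomorphisms. -/
def WeakEq : CDGA → CDGA → Prop := Relation.EqvGen QIso

end CDGA

/-- A Sullivan algebra `(∧V, d)`: a cdga which is free as a graded-commutative
algebra on a graded subspace `V = {V^k}_{k ≥ 1}` (expressed by the universal
property of extending degreewise linear maps on `V` uniquely to graded algebra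
morphisms), together with an increasing filtration `V(0) ⊆ V(1) ⊆ ⋯` of `V`
with `d (V(0)) = 0` and `d(V(r+1)) ⊆ ∧V(r)`. -/
structure SullivanAlgebra extends CDGA where
  V : ℤ → Submodule ℚ carrier
  V_le : ∀ k, V k ≤ grading k
  V_nonpos : ∀ k ≤ 0, V k = ⊥
  gen : Algebra.adjoin ℚ (((⨆ k, V k) : Submodule ℚ carrier) : Set carrier) = ⊤
  free : ∀ (B : CDGA) (f : ∀ k : ℤ, (V k) →ₗ[ℚ] B.carrier),
    (∀ (k : ℤ) (v : V k), f k v ∈ B.grading k) →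
    ∃! φ : carrier →+* B.carrier,
      (∀ (q : ℚ) (x : carrier), φ (q • x) = q • φ x) ∧
      (∀ i : ℤ, ∀ x ∈ grading i, φ x ∈ B.grading i) ∧
      ∀ (k : ℤ) (v : V k), φ v = f k v
  filt : ℕ → Submodule ℚ carrier
  filt_le : ∀ r, filt r ≤ ⨆ k, V k
  filt_mono : Monotone filt
  filt_exhausts : (⨆ k, V k) ≤ ⨆ r, filt r
  d_filt_zero : ∀ x ∈ filt 0, d x = 0
  d_filt_succ : ∀ r : ℕ, ∀ x ∈ filt (r + 1), d x ∈ Algebra.adjoin ℚ ((filt r : Set carrier))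

namespace SullivanAlgebra

def Vtot (S : SullivanAlgebra) : Submodule ℚ S.carrier := ⨆ k, S.V k

/-- `∧^{≥ m} V`: the span of the products of at least `m` elements of `V`. -/
def wedge (S : SullivanAlgebra) (m : ℕ) : Submodule ℚ S.carrier :=
  S.Vtot ^ m * ⊤

end SullivanAlgebra

/-- A minimal Sullivan algebra: `d(V) ⊆ ∧^{≥2} V`. -/
structure MinimalSullivanAlgebra extends SullivanAlgebra where
  minimal : ∀ x ∈ toSullivanAlgebra.Vtot, d x ∈ toSullivanAlgebra.wedge 2
/-! ### Singular cohomology and homology with rational coefficients -/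

/-- The standard topological `n`-simplex. -/
def SSimplex (n : ℕ) : Type :=
  {f : Fin (n + 1) → ℝ // (∀ i, 0 ≤ f i) ∧ ∑ i, f i = 1}

instance (n : ℕ) : TopologicalSpace (SSimplex n) := by
  unfold SSimplex; infer_instance

/-- The `i`-th face inclusion of standard simplices. -/
def SSimplex.face {n : ℕ} (i : Fin (n + 2)) : C(SSimplex n, SSimplex (n + 1)) where
  toFun f := ⟨fun j => ∑ k : Fin (n + 1), if i.succAbove k = j then f.1 k else 0, by
    constructor
    · intro j
      refine Finset.sum_nonneg fun k _ => ?_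
      split
      · exact f.2.1 k
      · exact le_rfl
    · rw [Finset.sum_comm]
      have h : ∀ k : Fin (n + 1),
          (∑ j : Fin (n + 2), if i.succAbove k = j then f.1 k else 0) = f.1 k := by
        intro k
        simp [Finset.sum_ite_eq]
      rw [Finset.sum_congr rfl fun k _ => h k]
      exact f.2.2⟩
  continuous_toFun := by
    apply Continuous.subtype_mk
    apply continuous_pi
    intro j
    apply continuous_finset_sum
    intro k _
    by_cases h : i.succAbove k = j
    · have hk : Continuous fun f : SSimplex n => f.1 k :=
        (continuous_apply k).comp continuous_subtype_val
      simpa [h] using hk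
    · simpa [h] using continuous_const

/-- Singular simplices in `X`. -/
abbrev SingularSimplex (X : Type) [TopologicalSpace X] (n : ℕ) := C(SSimplex n, X)

/-- Rational singular cochains. -/
abbrev scochain (X : Type) [TopologicalSpace X] (n : ℕ) : Type :=
  SingularSimplex X n → ℚ

/-- The singular coboundary operator. -/
def scoboundary (X : Type) [TopologicalSpace X] (n : ℕ) :
    scochain X n →ₗ[ℚ] scochain X (n + 1) where
  toFun f := fun σ => ∑ i : Fin (n + 2), (-1 : ℚ) ^ (i : ℕ) * f (σ.comp (SSimplex.face i))
  map_add' f g := by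
    funext σ
    simp [mul_add, Finset.sum_add_distrib]
  map_smul' q f := by
    funext σ
    simp [Finset.mul_sum, mul_left_comm]

def scocycles (X : Type) [TopologicalSpace X] (n : ℕ) : Submodule ℚ (scochain X n) :=
  LinearMap.ker (scoboundary X n)

def scobounds (X : Type) [TopologicalSpace X] : (n : ℕ) → Submodule ℚ (scochain X n)
  | 0 => ⊥
  | n + 1 => LinearMap.range (scoboundary X n)

/-- Rational singular cohomology `H^n(X;ℚ)`. -/
def SingCoh (X : Type) [TopologicalSpace X] (n : ℕ) : Type :=
  scocycles X n ⧸ ((scobounds X n).comap (scocycles X n).subtype)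

instance (X : Type) [TopologicalSpace X] (n : ℕ) : AddCommGroup (SingCoh X n) :=
  inferInstanceAs (AddCommGroup (_ ⧸ _))

instance (X : Type) [TopologicalSpace X] (n : ℕ) : Module ℚ (SingCoh X n) :=
  inferInstanceAs (Module ℚ (_ ⧸ _))

/-- Rational singular chains. -/
abbrev schain (X : Type) [TopologicalSpace X] (n : ℕ) := SingularSimplex X n →₀ ℚ

/-- The singular boundary operator `C_{n+1} → C_n`. -/
def sboundary (X : Type) [TopologicalSpace X] (n : ℕ) :
    schain X (n + 1) →ₗ[ℚ] schain X n :=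
  (Finsupp.lift (schain X n) ℚ (SingularSimplex X (n + 1))) fun σ =>
    ∑ i : Fin (n + 2), ((-1 : ℚ) ^ (i : ℕ)) • Finsupp.single (σ.comp (SSimplex.face i)) (1 : ℚ)

def scycles (X : Type) [TopologicalSpace X] : (n : ℕ) → Submodule ℚ (schain X n)
  | 0 => ⊤
  | n + 1 => LinearMap.ker (sboundary X n)

def sbounds (X : Type) [TopologicalSpace X] (n : ℕ) : Submodule ℚ (schain X n) :=
  LinearMap.range (sboundary X n)

/-- Rational singular homology `H_n(X;ℚ)`. -/
def SingH (X : Type) [TopologicalSpace X] (n : ℕ) : Type :=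
  scycles X n ⧸ ((sbounds X n).comap (scycles X n).subtype)

instance (X : Type) [TopologicalSpace X] (n : ℕ) : AddCommGroup (SingH X n) :=
  inferInstanceAs (AddCommGroup (_ ⧸ _))

instance (X : Type) [TopologicalSpace X] (n : ℕ) : Module ℚ (SingH X n) :=
  inferInstanceAs (Module ℚ (_ ⧸ _))

/-! ### Lusternik-Schnirelmann category -/

/-- `U` is contractible in `X`: the inclusion is null-homotopic. -/
def NullhomotopicIncl {X : Type} [TopologicalSpace X] (U : Set X) : Prop :=
  ∃ x₀ : X, ContinuousMap.Homotopic
    ⟨(Subtype.val : U → X), continuous_subtype_val⟩ (ContinuousMap.const U x₀)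

/-- `cat X ≤ m`: `X` is covered by `m+1` open subsets, each contractible in `X`. -/
def catLeSpace (X : Type) [TopologicalSpace X] (m : ℕ) : Prop :=
  ∃ U : Fin (m + 1) → Set X, (∀ i, IsOpen (U i)) ∧ (⋃ i, U i) = Set.univ ∧
    ∀ i, NullhomotopicIncl (U i)

/-- The LS category of a topological space, valued in `ℕ∞`. -/
def catSpace (X : Type) [TopologicalSpace X] : ℕ∞ :=
  sInf {e : ℕ∞ | ∃ m : ℕ, e = m ∧ catLeSpace X m}

/-- The quotient `(∧V/∧^{>m}V, d̄)` of a Sullivan algebra, characterized as a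
surjective cdga morphism with kernel `∧^{> m} V`. -/
structure SullivanAlgebra.LengthQuotient (S : SullivanAlgebra) (m : ℕ) where
  Q : CDGA
  ρ : CDGA.Hom S.toCDGA Q
  surj : Function.Surjective ρ.toFun
  ker : ∀ x : S.carrier, ρ.toFun x = 0 ↔ x ∈ S.wedge (m + 1)

/-- `cat (∧V,d) ≤ m`: there is a morphism `ψ` from a Sullivan model `(∧W,d)` of
`∧V/∧^{>m}V` into `(∧V,d)` with `ρ ∘ ψ ∼ φ`. -/
def SullivanAlgebra.catLe (S : SullivanAlgebra) (m : ℕ) : Prop :=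
  ∃ (LQ : S.LengthQuotient m) (W : SullivanAlgebra) (φ : CDGA.Hom W.toCDGA LQ.Q),
    CDGA.QuasiIso φ ∧ ∃ ψ : CDGA.Hom W.toCDGA S.toCDGA,
      CDGA.Homotopic (LQ.ρ.comp ψ) φ

/-- The LS category of a Sullivan algebra, valued in `ℕ∞`. -/
def SullivanAlgebra.cat (S : SullivanAlgebra) : ℕ∞ :=
  sInf {e : ℕ∞ | ∃ m : ℕ, e = m ∧ S.catLe m}

/-! ### Sullivan's functor `A_PL` -/

/-- The data of Sullivan's contravariant functor `A_PL` from topological spaces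
to rational cdga's: it is functorial, homotopy invariant, concentrated in
non-negative degrees, and its cohomology is (degreewise) isomorphic to rational
singular cohomology. -/
structure APLTheory : Type 1 where
  obj : (X : Type) → TopologicalSpace X → CDGA
  map : {X Y : Type} → (tX : TopologicalSpace X) → (tY : TopologicalSpace Y) →
    C(X, Y) → CDGA.Hom (obj Y tY) (obj X tX)
  map_id : ∀ (X : Type) (tX : TopologicalSpace X) (a : (obj X tX).carrier),
    (map tX tX (ContinuousMap.id X)).toFun a = a
  map_comp : ∀ {X Y Z : Type} (tX : TopologicalSpace X) (tY : TopologicalSpace Y)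
    (tZ : TopologicalSpace Z) (f : C(X, Y)) (g : C(Y, Z)) (a : (obj Z tZ).carrier),
    (map tX tZ (g.comp f)).toFun a = (map tX tY f).toFun ((map tY tZ g).toFun a)
  grading_neg : ∀ (X : Type) (tX : TopologicalSpace X) (n : ℤ), n < 0 →
    (obj X tX).grading n = ⊥
  cohEquiv : ∀ (X : Type) (tX : TopologicalSpace X) (n : ℕ),
    Nonempty (((obj X tX).H n) ≃ₗ[ℚ] @SingCoh X tX n)
  htpy_invariant : ∀ {X Y : Type} (tX : TopologicalSpace X) (tY : TopologicalSpace Y)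
    (f g : C(X, Y)), @ContinuousMap.Homotopic X Y tX tY f g →
    CDGA.Homotopic (map tX tY f) (map tX tY g)

/-- `A` plays the role of `A_PL(X)`: a cdga concentrated in non-negative degrees
whose cohomology is the rational cohomology of `X`. -/
def IsAPLModelOf (A : CDGA) (X : Type) [TopologicalSpace X] : Prop :=
  (∀ n : ℤ, n < 0 → A.grading n = ⊥) ∧
  ∀ n : ℕ, Nonempty (A.H n ≃ₗ[ℚ] SingCoh X n)

/-!
A minimal model of `A` is built by attaching generators in stages `(n, r)`, ordered
lexicographically. Stage `(n, r)` attaches generators of degree `n + 1` which form a basis of the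
degree `n + 1` cohomology of the mapping cone of the map constructed so far. A cocycle of the cone
involves only finitely many generators, so repeating the stage for all `r` kills this cohomology,
and since the new classes are linearly independent, a cocycle of degree `n` cannot involve the
generators of degree `n + 1`. So the limit cone is acyclic, and minimality is automatic because
the differentials of new generators involve only generators of at most the same degree.

For uniqueness, a map from a Sullivan algebra lifts along a surjective quasi-isomorphism, by
induction over its filtration. Applied to the object of paths `(s, c)` in `S × (∧(t,dt) ⊗ A)` with
`φ s = ε₀ c`, this lifts `ψ` through `φ` up to homotopy. The lift is a quasi-isomorphism between
minimal Sullivan algebras, hence an isomorphism.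
-/

namespace CDGA

theorem isInternal (A : CDGA) : DirectSum.IsInternal A.grading := by
  classical
  refine (DirectSum.isInternal_submodule_iff_iSupIndep_and_iSup_eq_top _).2
    ⟨iSupIndep_of_dfinsupp_lsum_injective _ ((injective_iff_map_eq_zero _).2 fun x hx => ?_),
      A.spanning⟩
  have hsupp (i : ℤ) (hi : (x i : A.carrier) ≠ 0) : i ∈ x.support :=
    DFinsupp.mem_support_iff.2 fun h => hi (by rw [h]; rfl)
  have h := A.indep (Finsupp.onFinset x.support (fun i => (x i : A.carrier)) hsupp)
    (fun i => (x i).2) (by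
      rw [Finsupp.onFinset_sum _ fun _ => rfl]
      rwa [DFinsupp.lsum_apply_apply, DFinsupp.sumAddHom_apply] at hx)
  ext i
  exact DFunLike.congr_fun h i

instance (A : CDGA) : SetLike.GradedMonoid A.grading where
  one_mem := A.one_mem
  mul_mem _ _ _ _ := A.mul_mem

instance (A : CDGA) : GradedAlgebra A.grading := A.isInternal.gradedAlgebra

@[elab_as_elim]
theorem homogeneous_induction (A : CDGA) {P : A.carrier → Prop} (x : A.carrier)
    (hom : ∀ i, ∀ x ∈ A.grading i, P x) (add : ∀ x y, P x → P y → P (x + y)) : P x :=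
  DirectSum.Decomposition.inductionOn A.grading (hom 0 0 (Submodule.zero_mem _))
    (fun x => hom _ x x.2) (fun x y => add x y) x

/-- The projection onto the component of degree `k`. -/
abbrev proj (A : CDGA) (k : ℤ) : A.carrier →ₗ[ℚ] A.carrier := GradedAlgebra.proj A.grading k

theorem proj_mem (A : CDGA) (k : ℤ) (x : A.carrier) : A.proj k x ∈ A.grading k :=
  (DirectSum.decompose A.grading x k).2

theorem proj_self (A : CDGA) {k : ℤ} {x : A.carrier} (hx : x ∈ A.grading k) : A.proj k x = x :=
  DirectSum.decompose_of_mem_same _ hx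

theorem proj_of_ne (A : CDGA) {i k : ℤ} (hik : i ≠ k) {x : A.carrier} (hx : x ∈ A.grading i) :
    A.proj k x = 0 :=
  DirectSum.decompose_of_mem_ne _ hx hik

theorem proj_d (A : CDGA) (k : ℤ) (x : A.carrier) : A.proj (k + 1) (A.d x) = A.d (A.proj k x) := by
  induction x using A.homogeneous_induction with
  | hom i x hx =>
    obtain rfl | h := eq_or_ne i k
    · rw [A.proj_self hx, A.proj_self (A.d_mem hx)]
    · rw [A.proj_of_ne h hx, map_zero, A.proj_of_ne (by simpa using h) (A.d_mem hx)]
  | add x y hx hy => simp only [map_add, hx, hy]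

/-- The sign involution `x ↦ (-1)^|x| x`, in terms of which the Leibniz rule needs no
homogeneity assumption. -/
def sgn (A : CDGA) : A.carrier →ₐ[ℚ] A.carrier :=
  (DirectSum.toAlgebra ℚ (fun i => A.grading i) (fun i => (-1 : ℚ) ^ i • (A.grading i).subtype)
    (by simp) (fun {i j} x y => by
      simp [zpow_add₀, mul_smul, smul_comm ((-1 : ℚ) ^ i)])).comp
    (DirectSum.decomposeAlgEquiv A.grading).toAlgHom

theorem sgn_of_mem (A : CDGA) {i : ℤ} {x : A.carrier} (hx : x ∈ A.grading i) :
    A.sgn x = (-1 : ℚ) ^ i • x := by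
  change DirectSum.toAddMonoid _ (DirectSum.decompose A.grading x) = _
  rw [DirectSum.decompose_of_mem _ hx, DirectSum.toAddMonoid_of]
  rfl

theorem sgn_mem (A : CDGA) {i : ℤ} {x : A.carrier} (hx : x ∈ A.grading i) :
    A.sgn x ∈ A.grading i := by
  rw [A.sgn_of_mem hx]
  exact Submodule.smul_mem _ _ hx

theorem sgn_sgn (A : CDGA) (x : A.carrier) : A.sgn (A.sgn x) = x := by
  induction x using A.homogeneous_induction with
  | hom i x hx =>
    rw [A.sgn_of_mem hx, map_smul, A.sgn_of_mem hx, smul_smul, ← mul_zpow]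
    simp
  | add x y hx hy => simp only [map_add, hx, hy]

theorem d_sgn (A : CDGA) (x : A.carrier) : A.d (A.sgn x) = -A.sgn (A.d x) := by
  induction x using A.homogeneous_induction with
  | hom i x hx =>
    rw [A.sgn_of_mem hx, map_smul, A.sgn_of_mem (A.d_mem hx), zpow_add₀ (by norm_num)]
    simp
  | add x y hx hy => simp only [map_add, hx, hy, neg_add]

theorem d_mul (A : CDGA) (x y : A.carrier) : A.d (x * y) = A.d x * y + A.sgn x * A.d y := by
  induction x using A.homogeneous_induction with
  | hom i x hx => rw [A.leibniz hx, A.sgn_of_mem hx, smul_mul_assoc]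
  | add x z hx hz =>
    simp only [add_mul, map_add, hx, hz]
    abel

theorem d_one (A : CDGA) : A.d 1 = 0 := by
  simpa using A.d_mul 1 1

theorem exists_d_eq_of_mem_cobounds (A : CDGA) {n : ℤ} {x : A.carrier} (hx : x ∈ A.cobounds n) :
    ∃ y ∈ A.grading (n - 1), A.d y = x := by
  obtain ⟨hx, y, rfl⟩ := hx
  refine ⟨A.proj (n - 1) y, A.proj_mem _ _, ?_⟩
  rw [← A.proj_d, sub_add_cancel, A.proj_self hx]

theorem d_mem_cobounds (A : CDGA) {n : ℤ} {y : A.carrier} (hy : y ∈ A.grading (n - 1)) :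
    A.d y ∈ A.cobounds n :=
  ⟨by simpa using A.d_mem hy, y, rfl⟩

theorem cobounds_le_cocycles (A : CDGA) (n : ℤ) : A.cobounds n ≤ A.cocycles n := by
  rintro _ ⟨hx, y, rfl⟩
  exact ⟨hx, A.d_sq y⟩

/-! ### Morphisms -/

/-- Algebra morphisms between the underlying algebras which preserve degrees. -/
def IsGraded {A B : CDGA} (f : A.carrier →ₐ[ℚ] B.carrier) : Prop :=
  ∀ i : ℤ, ∀ x ∈ A.grading i, f x ∈ B.grading i

/-- The algebra morphism underlying a morphism of cdga's. -/
def Hom.alg {A B : CDGA} (f : Hom A B) : A.carrier →ₐ[ℚ] B.carrier :=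
  AlgHom.ofLinearMap { f.toFun with map_smul' := f.map_smul } (map_one f.toFun) (map_mul f.toFun)

/-- A degree preserving algebra morphism commuting with differentials, as a morphism of
cdga's. -/
def Hom.ofAlgHom {A B : CDGA} (f : A.carrier →ₐ[ℚ] B.carrier) (hf : IsGraded f)
    (hd : ∀ x, f (A.d x) = B.d (f x)) : Hom A B where
  toFun := f
  map_smul := _root_.map_smul f
  map_grading := hf
  map_d := hd

theorem Hom.ext {A B : CDGA} {f g : Hom A B} (h : ∀ x, f.toFun x = g.toFun x) : f = g := by
  cases f
  cases g
  congr
  exact RingHom.ext h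

theorem IsGraded.map_sgn {A B : CDGA} {f : A.carrier →ₐ[ℚ] B.carrier} (hf : IsGraded f)
    (x : A.carrier) : f (A.sgn x) = B.sgn (f x) := by
  induction x using A.homogeneous_induction with
  | hom i x hx => rw [A.sgn_of_mem hx, B.sgn_of_mem (hf i x hx), map_smul]
  | add x y hx hy => simp only [map_add, hx, hy]

theorem Hom.map_proj {A B : CDGA} (f : Hom A B) (k : ℤ) (x : A.carrier) :
    f.toFun (A.proj k x) = B.proj k (f.toFun x) := by
  induction x using A.homogeneous_induction with
  | hom i x hx =>
    obtain rfl | h := eq_or_ne i k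
    · rw [A.proj_self hx, B.proj_self (f.map_grading _ _ hx)]
    · rw [A.proj_of_ne h hx, B.proj_of_ne h (f.map_grading _ _ hx), map_zero]
  | add x y hx hy => simp only [map_add, hx, hy]

theorem IsGraded.map_d_of_mem_adjoin {A B : CDGA} {f : A.carrier →ₐ[ℚ] B.carrier}
    (hf : IsGraded f) {s : Set A.carrier} (hs : ∀ x ∈ s, f (A.d x) = B.d (f x)) {x : A.carrier}
    (hx : x ∈ Algebra.adjoin ℚ s) : f (A.d x) = B.d (f x) := by
  induction hx using Algebra.adjoin_induction with
  | mem x hx => exact hs x hx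
  | algebraMap q =>
    simp only [Algebra.algebraMap_eq_smul_one, map_smul, map_one, d_one, smul_zero, map_zero]
  | add x y _ _ hx hy => simp only [map_add, hx, hy]
  | mul x y _ _ hx hy => simp only [A.d_mul, B.d_mul, map_add, map_mul, hx, hy, hf.map_sgn]

theorem Hom.map_cocycles {A B : CDGA} (f : Hom A B) {n : ℤ} {x : A.carrier}
    (hx : x ∈ A.cocycles n) : f.toFun x ∈ B.cocycles n :=
  ⟨f.map_grading n x hx.1, LinearMap.mem_ker.2 <| by
    rw [← f.map_d, LinearMap.mem_ker.1 hx.2, map_zero]⟩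

theorem Hom.map_cobounds {A B : CDGA} (f : Hom A B) {n : ℤ} {x : A.carrier}
    (hx : x ∈ A.cobounds n) : f.toFun x ∈ B.cobounds n := by
  obtain ⟨hx, y, rfl⟩ := hx
  exact ⟨f.map_grading n _ hx, f.toFun y, (f.map_d y).symm⟩

theorem QuasiIso.id (A : CDGA) : QuasiIso (Hom.id A) :=
  ⟨fun _ _ _ h => h, fun _ b hb => ⟨b, hb, (sub_self b).symm ▸ Submodule.zero_mem _⟩⟩

theorem QuasiIso.comp {A B C : CDGA} {g : Hom B C} {f : Hom A B} (hg : QuasiIso g)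
    (hf : QuasiIso f) : QuasiIso (g.comp f) := by
  refine ⟨fun n a ha h => hf.1 n a ha (hg.1 n _ (f.map_cocycles ha) h), fun n c hc => ?_⟩
  obtain ⟨b, hb, hcb⟩ := hg.2 n c hc
  obtain ⟨a, ha, hba⟩ := hf.2 n b hb
  exact ⟨a, ha, by simpa [Hom.comp] using Submodule.add_mem _ hcb (g.map_cobounds hba)⟩

theorem QuasiIso.of_comp_left {A B C : CDGA} {g : Hom B C} {f : Hom A B} (hg : QuasiIso g)
    (hgf : QuasiIso (g.comp f)) : QuasiIso f := by
  refine ⟨fun n a ha h => hgf.1 n a ha (g.map_cobounds h), fun n b hb => ?_⟩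
  obtain ⟨a, ha, hba⟩ := hgf.2 n _ (g.map_cocycles hb)
  refine ⟨a, ha, hg.1 n _ (Submodule.sub_mem _ hb (f.map_cocycles ha)) ?_⟩
  rwa [map_sub]

theorem QuasiIso.of_comp_right {A B C : CDGA} {g : Hom B C} {f : Hom A B} (hf : QuasiIso f)
    (hgf : QuasiIso (g.comp f)) : QuasiIso g := by
  refine ⟨fun n b hb h => ?_, fun n c hc => ?_⟩
  · obtain ⟨a, ha, hba⟩ := hf.2 n b hb
    have hga : (g.comp f).toFun a ∈ C.cobounds n := by
      simpa [Hom.comp] using Submodule.sub_mem _ h (g.map_cobounds hba)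
    simpa using Submodule.add_mem _ hba (f.map_cobounds (hgf.1 n a ha hga))
  · obtain ⟨a, ha, hca⟩ := hgf.2 n c hc
    exact ⟨_, f.map_cocycles ha, hca⟩

end CDGA

/-! ### Subalgebras generated by homogeneous elements -/

section GradedAlgebra

variable {R A I : Type*} [CommRing R] [Ring A] [Algebra R A] (𝒜 : ℤ → Submodule R A)
  [GradedAlgebra 𝒜]

theorem proj_mem_adjoin {s : Set A} (hs : ∀ x ∈ s, SetLike.IsHomogeneousElem 𝒜 x) {x : A}
    (hx : x ∈ Algebra.adjoin R s) (k : ℤ) : GradedAlgebra.proj 𝒜 k x ∈ Algebra.adjoin R s := by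
  rw [← Subalgebra.mem_toSubsemiring, Algebra.adjoin_toSubsemiring] at hx ⊢
  refine IsHomogeneous.subsemiringClosure_of_isHomogeneousElem (𝒜 := 𝒜) ?_ k hx
  rintro y (⟨q, rfl⟩ | hy)
  exacts [⟨0, SetLike.algebraMap_mem_graded 𝒜 q⟩, hs y hy]

theorem mem_span_inter_of_mem_span {s : Set A} (hs : ∀ x ∈ s, SetLike.IsHomogeneousElem 𝒜 x)
    {m : ℤ} {x : A} (hx : x ∈ Submodule.span R s) (hxm : x ∈ 𝒜 m) :
    x ∈ Submodule.span R (s ∩ 𝒜 m) := by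
  have hproj : GradedAlgebra.proj 𝒜 m x = x := DirectSum.decompose_of_mem_same 𝒜 hxm
  suffices h : Submodule.span R s ≤
      (Submodule.span R (s ∩ 𝒜 m)).comap (GradedAlgebra.proj 𝒜 m) from hproj ▸ h hx
  refine Submodule.span_le.2 fun y hy => ?_
  obtain ⟨i, hi⟩ := hs y hy
  rw [SetLike.mem_coe, Submodule.mem_comap, GradedAlgebra.proj_apply]
  obtain rfl | him := eq_or_ne i m
  · rw [DirectSum.decompose_of_mem_same 𝒜 hi]
    exact Submodule.subset_span ⟨hy, hi⟩
  · rw [DirectSum.decompose_of_mem_ne 𝒜 hi him]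
    exact Submodule.zero_mem _

variable {𝒜} {g : I → A} {deg : I → ℤ}

/-- The span of the products of at least two of the elements `g i`, `i ∈ U`, which also lie in
the subalgebra generated by those of degree less than `m`. -/
def decomposables (R : Type*) [CommRing R] [Algebra R A] (g : I → A) (deg : I → ℤ) (U : Set I)
    (m : ℤ) : Submodule R A :=
  Subalgebra.toSubmodule (Algebra.adjoin R (g '' {i ∈ U | deg i < m})) ⊓
    Submodule.span R (g '' U) ^ 2 * ⊤

theorem exists_degree_of_mem_closure (hg : ∀ i, g i ∈ 𝒜 (deg i)) {U : Set I}
    (hU : ∀ i ∈ U, 1 ≤ deg i) {x : A} (hx : x ∈ Submonoid.closure (g '' U)) :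
    x = 1 ∨ ∃ m, 1 ≤ m ∧ x ∈ 𝒜 m ∧ ((∃ i ∈ U, deg i = m ∧ g i = x) ∨
      x ∈ decomposables R g deg U m) := by
  induction hx using Submonoid.closure_induction_left with
  | one => exact Or.inl rfl
  | mul_left x hx y _ hy =>
    obtain ⟨i, hi, rfl⟩ := hx
    have hspan {j : I} (hj : j ∈ U) : g j ∈ Submodule.span R (g '' U) :=
      Submodule.subset_span ⟨j, hj, rfl⟩
    rcases hy with rfl | ⟨n, hn, hyn, hy⟩
    · exact Or.inr ⟨deg i, hU i hi, by simpa using hg i, Or.inl ⟨i, hi, rfl, (mul_one _).symm⟩⟩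
    refine Or.inr ⟨deg i + n, by linarith [hU i hi], SetLike.mul_mem_graded (hg i) hyn, Or.inr ?_⟩
    have hin : g i ∈ Algebra.adjoin R (g '' {j ∈ U | deg j < deg i + n}) :=
      Algebra.subset_adjoin ⟨i, ⟨hi, by omega⟩, rfl⟩
    rcases hy with ⟨j, hj, rfl, rfl⟩ | ⟨hy, hy2⟩
    · refine ⟨Subalgebra.mul_mem _ hin
        (Algebra.subset_adjoin ⟨j, ⟨hj, by linarith [hU i hi]⟩, rfl⟩), ?_⟩
      rw [← mul_one (g i * g j), pow_two]
      exact Submodule.mul_mem_mul (Submodule.mul_mem_mul (hspan hi) (hspan hj)) trivial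
    · refine ⟨Subalgebra.mul_mem _ hin (Algebra.adjoin_mono (Set.image_mono fun j hj => ?_) hy), ?_⟩
      · exact ⟨hj.1, by linarith [hj.2, hU i hi]⟩
      · rw [pow_two, mul_assoc] at hy2 ⊢
        have hle : Submodule.span R (g '' U) * (Submodule.span R (g '' U) * ⊤) ≤
            Submodule.span R (g '' U) * ⊤ := mul_le_mul' le_rfl le_top
        exact Submodule.mul_mem_mul (hspan hi) (hle hy2)

theorem isHomogeneousElem_of_mem_closure (hg : ∀ i, g i ∈ 𝒜 (deg i)) {U : Set I} {x : A}
    (hx : x ∈ Submonoid.closure (g '' U)) : SetLike.IsHomogeneousElem 𝒜 x :=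
  (Submonoid.closure_le (S := SetLike.homogeneousSubmonoid 𝒜)).2
    (Set.image_subset_iff.2 fun i _ => ⟨deg i, hg i⟩) hx

theorem mem_sup_decomposables (hg : ∀ i, g i ∈ 𝒜 (deg i)) {U : Set I}
    (hU : ∀ i ∈ U, 1 ≤ deg i) {m : ℤ} (hm : 1 ≤ m) {x : A} (hx : x ∈ Algebra.adjoin R (g '' U))
    (hxm : x ∈ 𝒜 m) :
    x ∈ Submodule.span R (g '' {i ∈ U | deg i = m}) ⊔ decomposables R g deg U m := by
  rw [← Subalgebra.mem_toSubmodule, Algebra.adjoin_eq_span] at hx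
  refine Submodule.span_le.2 ?_ (mem_span_inter_of_mem_span 𝒜
    (fun y hy => isHomogeneousElem_of_mem_closure hg hy) hx hxm)
  rintro y ⟨hy, hym⟩
  obtain rfl | hy0 := eq_or_ne y 0
  · exact Submodule.zero_mem _
  rcases exists_degree_of_mem_closure (R := R) hg hU hy with rfl | ⟨n, -, hyn, hy⟩
  · have := DirectSum.degree_eq_of_mem_mem 𝒜 hym SetLike.GradedOne.one_mem hy0
    omega
  obtain rfl := DirectSum.degree_eq_of_mem_mem 𝒜 hym hyn hy0
  rcases hy with ⟨i, hi, him, rfl⟩ | hy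
  · exact Submodule.mem_sup_left (Submodule.subset_span ⟨i, ⟨hi, him⟩, rfl⟩)
  · exact Submodule.mem_sup_right hy

theorem mem_decomposables_of_lt (hg : ∀ i, g i ∈ 𝒜 (deg i)) {U : Set I}
    (hU : ∀ i ∈ U, 1 ≤ deg i) {m : ℤ} (hm : 1 ≤ m) (hlt : ∀ i ∈ U, deg i < m) {x : A}
    (hx : x ∈ Algebra.adjoin R (g '' U)) (hxm : x ∈ 𝒜 m) : x ∈ decomposables R g deg U m := by
  have h := mem_sup_decomposables hg hU hm hx hxm
  rwa [Set.sep_eq_empty_iff_mem_false.2 fun i hi => (hlt i hi).ne, Set.image_empty,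
    Submodule.span_empty, bot_sup_eq] at h

theorem mem_one_of_mem_adjoin (hg : ∀ i, g i ∈ 𝒜 (deg i)) {U : Set I}
    (hU : ∀ i ∈ U, 1 ≤ deg i) {m : ℤ} (hm : m ≤ 0) {x : A} (hx : x ∈ Algebra.adjoin R (g '' U))
    (hxm : x ∈ 𝒜 m) : x ∈ (1 : Submodule R A) := by
  rw [← Subalgebra.mem_toSubmodule, Algebra.adjoin_eq_span] at hx
  refine Submodule.span_le.2 ?_ (mem_span_inter_of_mem_span 𝒜
    (fun y hy => isHomogeneousElem_of_mem_closure hg hy) hx hxm)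
  rintro y ⟨hy, hym⟩
  obtain rfl | hy0 := eq_or_ne y 0
  · exact Submodule.zero_mem _
  rcases exists_degree_of_mem_closure (R := R) hg hU hy with rfl | ⟨n, hn, hyn, -⟩
  · exact Submodule.one_le.1 le_rfl
  · have := DirectSum.degree_eq_of_mem_mem 𝒜 hym hyn hy0
    omega

end GradedAlgebra

/-! ### Triangular bases of Sullivan algebras -/

theorem exists_linearIndepOn_span_inter {K M : Type*} [DivisionRing K] [AddCommGroup M]
    [Module K M] {F : ℕ → Submodule K M} (hF : Monotone F) :
    ∃ B : Set M, LinearIndepOn K id B ∧ B ⊆ ⋃ r, F r ∧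
      ∀ r, Submodule.span K (B ∩ F r) = F r := by
  have hext (r : ℕ) (s : Set M) (hs : LinearIndepOn K id s) (hsF : s ⊆ F r) :
      ∃ t, LinearIndepOn K id t ∧ s ⊆ t ∧ Submodule.span K t = F r :=
    ⟨hs.extend hsF, hs.linearIndepOn_extend hsF, hs.subset_extend hsF, by
      rw [hs.span_extend_eq_span, Submodule.span_eq]⟩
  choose! e he hse hspan using hext
  let C : ℕ → Set M := fun r => r.rec (e 0 ∅) fun r s => e (r + 1) s
  have hC (r : ℕ) : LinearIndepOn K id (C r) ∧ Submodule.span K (C r) = F r := by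
    induction r with
    | zero =>
      exact ⟨he 0 ∅ (linearIndepOn_empty K id) (Set.empty_subset _),
        hspan 0 ∅ (linearIndepOn_empty K id) (Set.empty_subset _)⟩
    | succ r ih =>
      have hsub : C r ⊆ F (r + 1) := fun x hx => hF r.le_succ (ih.2 ▸ Submodule.subset_span hx)
      exact ⟨he _ _ ih.1 hsub, hspan _ _ ih.1 hsub⟩
  have hCF (r : ℕ) : C r ⊆ F r := fun x hx => (hC r).2 ▸ Submodule.subset_span hx
  have hmono : Monotone C := monotone_nat_of_le_succ fun r =>
    hse _ _ (hC r).1 ((hCF r).trans (hF r.le_succ))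
  refine ⟨⋃ r, C r, linearIndepOn_iUnion_of_directed hmono.directed_le fun r => (hC r).1,
    Set.iUnion_mono hCF, fun r => le_antisymm (Submodule.span_le.2 Set.inter_subset_right) ?_⟩
  refine (hC r).2.ge.trans (Submodule.span_mono ?_)
  exact Set.subset_inter (Set.subset_iUnion C r) (hCF r)

namespace SullivanAlgebra

open CDGA

theorem V_le_Vtot (T : SullivanAlgebra) (k : ℤ) : T.V k ≤ T.Vtot := le_iSup T.V k

theorem exists_isGraded_eq (T : SullivanAlgebra) {B : CDGA}
    (f : ∀ k : ℤ, T.V k →ₗ[ℚ] B.carrier) (hf : ∀ (k : ℤ) (v : T.V k), f k v ∈ B.grading k) :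
    ∃ χ : T.carrier →ₐ[ℚ] B.carrier, IsGraded (A := T.toCDGA) χ ∧
      ∀ (k : ℤ) (v : T.V k), χ v = f k v := by
  obtain ⟨φ, ⟨hsmul, hφ, hφf⟩, -⟩ := T.free B f hf
  exact ⟨AlgHom.ofLinearMap { φ with map_smul' := hsmul } (map_one φ) (map_mul φ), hφ, hφf⟩

/-- The filtration by graded subspaces associated with the given filtration. -/
def gradedFilt (T : SullivanAlgebra) (k : ℤ) (r : ℕ) : Submodule ℚ T.carrier :=
  (T.filt r).map (T.toCDGA.proj k)

theorem proj_mem_V (T : SullivanAlgebra) (k : ℤ) {x : T.carrier} (hx : x ∈ T.Vtot) :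
    T.toCDGA.proj k x ∈ T.V k := by
  suffices h : T.Vtot ≤ (T.V k).comap (T.toCDGA.proj k) from h hx
  refine iSup_le fun i x hx => ?_
  rw [Submodule.mem_comap]
  obtain rfl | h := eq_or_ne i k
  · rwa [T.toCDGA.proj_self (T.V_le _ hx)]
  · rw [T.toCDGA.proj_of_ne h (T.V_le _ hx)]
    exact Submodule.zero_mem _

theorem gradedFilt_le (T : SullivanAlgebra) (k : ℤ) (r : ℕ) : T.gradedFilt k r ≤ T.V k := by
  rintro _ ⟨x, hx, rfl⟩
  exact T.proj_mem_V k (T.filt_le r hx)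

theorem gradedFilt_mono (T : SullivanAlgebra) (k : ℤ) : Monotone (T.gradedFilt k) :=
  fun _ _ h => Submodule.map_mono (T.filt_mono h)

theorem iSup_gradedFilt (T : SullivanAlgebra) (k : ℤ) : ⨆ r, T.gradedFilt k r = T.V k := by
  refine le_antisymm (iSup_le (T.gradedFilt_le k)) fun v hv => ?_
  simp only [gradedFilt, ← Submodule.map_iSup]
  exact ⟨v, T.filt_exhausts (Submodule.mem_iSup_of_mem k hv), T.toCDGA.proj_self (T.V_le k hv)⟩

theorem filt_le_iSup_gradedFilt (T : SullivanAlgebra) (r : ℕ) :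
    T.filt r ≤ ⨆ k, T.gradedFilt k r := by
  classical
  intro x hx
  rw [← DirectSum.sum_support_decompose T.grading x]
  exact Submodule.sum_mem _ fun k _ => Submodule.mem_iSup_of_mem k ⟨x, hx, rfl⟩

theorem d_gradedFilt_zero (T : SullivanAlgebra) {k : ℤ} {v : T.carrier}
    (hv : v ∈ T.gradedFilt k 0) : T.d v = 0 := by
  obtain ⟨x, hx, rfl⟩ := hv
  rw [← T.toCDGA.proj_d, T.d_filt_zero x hx, map_zero]

theorem d_gradedFilt_succ (T : SullivanAlgebra) {k : ℤ} {r : ℕ} {v : T.carrier}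
    (hv : v ∈ T.gradedFilt k (r + 1)) :
    T.d v ∈ Algebra.adjoin ℚ (⋃ j, (T.gradedFilt j r : Set T.carrier)) := by
  obtain ⟨x, hx, rfl⟩ := hv
  rw [← T.toCDGA.proj_d]
  refine proj_mem_adjoin T.grading ?_ ?_ _
  · intro y hy
    obtain ⟨j, hj⟩ := Set.mem_iUnion.1 hy
    exact ⟨j, T.V_le j (T.gradedFilt_le j r hj)⟩
  · refine Algebra.adjoin_le (fun y hy => ?_) (T.d_filt_succ r x hx)
    have hle : (⨆ j, T.gradedFilt j r) ≤ Subalgebra.toSubmodule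
        (Algebra.adjoin ℚ (⋃ j, (T.gradedFilt j r : Set T.carrier))) :=
      iSup_le fun j z hz => Algebra.subset_adjoin (Set.mem_iUnion.2 ⟨j, hz⟩)
    exact hle (T.filt_le_iSup_gradedFilt r hy)

/-- A homogeneous basis of the space of generators `V` with respect to which the differential
is triangular: the differential of a basis vector lies in the subalgebra generated by the basis
vectors of smaller rank. -/
structure TriangularBasis (T : SullivanAlgebra) where
  ι : ℤ → Type
  basis : ∀ k, Module.Basis (ι k) ℚ (T.V k)
  rank : (Σ k, ι k) → ℕ
  d_mem : ∀ i, T.d (basis i.1 i.2) ∈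
    Algebra.adjoin ℚ ((fun j : Σ k, ι k => (basis j.1 j.2 : T.carrier)) '' {j | rank j < rank i})

theorem exists_basis_span (T : SullivanAlgebra) (k : ℤ) :
    ∃ (ι : Type) (b : Module.Basis ι ℚ (T.V k)) (rank : ι → ℕ),
      (∀ i, (b i : T.carrier) ∈ T.gradedFilt k (rank i)) ∧
      ∀ r, T.gradedFilt k r ≤
        Submodule.span ℚ ((fun i => (b i : T.carrier)) '' {i | rank i ≤ r}) := by
  classical
  obtain ⟨B, hB, hBF, hspan⟩ := exists_linearIndepOn_span_inter (T.gradedFilt_mono k)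
  have hBV : Submodule.span ℚ B = T.V k := by
    refine le_antisymm (Submodule.span_le.2 fun x hx => ?_) ?_
    · obtain ⟨r, hr⟩ := Set.mem_iUnion.1 (hBF hx)
      exact T.gradedFilt_le k r hr
    · rw [← T.iSup_gradedFilt k]
      exact iSup_le fun r => (hspan r).ge.trans (Submodule.span_mono Set.inter_subset_left)
  have hex (i : B) : ∃ r, (i : T.carrier) ∈ T.gradedFilt k r := Set.mem_iUnion.1 (hBF i.2)
  let b : Module.Basis B ℚ (T.V k) := (Module.Basis.span (v := ((↑) : B → T.carrier))
    (LinearIndepOn.linearIndependent hB)).map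
      (LinearEquiv.ofEq _ _ (by rw [Subtype.range_coe, hBV]))
  have hb (i : B) : (b i : T.carrier) = i := by simp [b, Module.Basis.span_apply]
  refine ⟨B, b, fun i => Nat.find (hex i), fun i => hb i ▸ Nat.find_spec (hex i), fun r => ?_⟩
  refine (hspan r).ge.trans (Submodule.span_mono fun x hx => ?_)
  exact ⟨⟨x, hx.1⟩, Nat.find_min' _ hx.2, hb _⟩

theorem exists_triangularBasis (T : SullivanAlgebra) : Nonempty T.TriangularBasis := by
  choose ι b rank hb hspan using T.exists_basis_span
  refine ⟨ι, b, fun i => rank i.1 i.2, fun ⟨k, i⟩ => ?_⟩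
  dsimp only
  rcases hr : rank k i with _ | r
  · rw [T.d_gradedFilt_zero (hr ▸ hb k i)]
    exact Subalgebra.zero_mem _
  · refine Algebra.adjoin_le (Set.iUnion_subset fun j x hx => ?_)
      (T.d_gradedFilt_succ (hr ▸ hb k i))
    refine Algebra.span_le_adjoin ℚ _ (Submodule.span_mono ?_ (hspan j r hx))
    rintro _ ⟨l, hl, rfl⟩
    exact ⟨⟨j, l⟩, Nat.lt_succ_of_le hl, rfl⟩

namespace TriangularBasis

variable {T : SullivanAlgebra} (β : T.TriangularBasis)

/-- The basis vectors, as elements of the algebra. -/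
def vec (i : Σ k, β.ι k) : T.carrier := β.basis i.1 i.2

theorem d_vec_mem (i : Σ k, β.ι k) :
    T.d (β.vec i) ∈ Algebra.adjoin ℚ (β.vec '' {j | β.rank j < β.rank i}) := β.d_mem i

theorem vec_mem_V (i : Σ k, β.ι k) : β.vec i ∈ T.V i.1 := (β.basis i.1 i.2).2

theorem vec_mem (i : Σ k, β.ι k) : β.vec i ∈ T.grading i.1 := T.V_le _ (β.vec_mem_V i)

theorem one_le_degree (i : Σ k, β.ι k) : 1 ≤ i.1 := by
  by_contra! h
  have hi : (β.basis i.1 i.2 : T.carrier) ∈ (⊥ : Submodule ℚ T.carrier) :=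
    T.V_nonpos i.1 (by omega) ▸ (β.basis i.1 i.2).2
  exact (β.basis i.1).ne_zero i.2 (Subtype.ext hi)

theorem span_range_vec : Submodule.span ℚ (Set.range β.vec) = T.Vtot := by
  refine le_antisymm (Submodule.span_le.2 ?_) (iSup_le fun k v hv => ?_)
  · rintro _ ⟨i, rfl⟩
    exact T.V_le_Vtot _ (β.vec_mem_V i)
  · have hv' := Submodule.mem_map_of_mem (f := (T.V k).subtype)
      ((β.basis k).mem_span ⟨v, hv⟩)
    rw [Submodule.map_span] at hv'
    refine Submodule.span_mono ?_ hv'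
    rintro _ ⟨_, ⟨i, rfl⟩, rfl⟩
    exact ⟨⟨k, i⟩, rfl⟩

theorem adjoin_range_vec : Algebra.adjoin ℚ (Set.range β.vec) = ⊤ := by
  rw [← Algebra.adjoin_span, β.span_range_vec]
  exact T.gen

theorem exists_isGraded_eq {B : CDGA} (w : ∀ i : Σ k, β.ι k, B.grading i.1) :
    ∃ χ : T.carrier →ₐ[ℚ] B.carrier, IsGraded (A := T.toCDGA) χ ∧ ∀ i, χ (β.vec i) = w i := by
  obtain ⟨χ, hχ, hχw⟩ := T.exists_isGraded_eq
    (fun k => (B.grading k).subtype ∘ₗ (β.basis k).constr ℚ fun i => w ⟨k, i⟩)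
    fun k v => Subtype.coe_prop _
  exact ⟨χ, hχ, fun i => (hχw _ _).trans (by simp [Module.Basis.constr_basis])⟩

end TriangularBasis

end SullivanAlgebra

/-! ### Lifting along quasi-isomorphisms -/

theorem exists_forall_of_local {S : Type*} {r : S → S → Prop} (hr : WellFounded r)
    {D : S → Type*} [∀ s, Nonempty (D s)] {R : ∀ s, (∀ s, D s) → D s → Prop}
    (hR : ∀ s f, ∃ x, R s f x)
    (hloc : ∀ s f f' x, (∀ t, r t s → f t = f' t) → R s f x → R s f' x) :
    ∃ f : ∀ s, D s, ∀ s, R s f (f s) := by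
  classical
  choose g hg using hR
  let step (s : S) (f : ∀ t, r t s → D t) : D s :=
    g s fun t => if h : r t s then f t h else Classical.arbitrary _
  refine ⟨hr.fix step, fun s => ?_⟩
  rw [WellFounded.fix_eq]
  exact hloc s _ _ _ (fun t ht => dif_pos ht) (hg s _)

theorem CDGA.QuasiIso.exists_d_eq_map_eq {P A : CDGA} {p : CDGA.Hom P A} (hp : CDGA.QuasiIso p)
    {k : ℤ} (hsurj : ∀ a ∈ A.grading (k - 1), ∃ x ∈ P.grading (k - 1), p.toFun x = a)
    {e : P.carrier} (he : e ∈ P.cocycles (k + 1)) {a : A.carrier} (ha : a ∈ A.grading k)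
    (hea : p.toFun e = A.d a) : ∃ w ∈ P.grading k, P.d w = e ∧ p.toFun w = a := by
  have hbd : p.toFun e ∈ A.cobounds (k + 1) := by
    rw [hea]
    exact A.d_mem_cobounds (by simpa using ha)
  obtain ⟨y, hy, rfl⟩ := P.exists_d_eq_of_mem_cobounds (hp.1 _ e he hbd)
  rw [add_sub_cancel_right] at hy
  have hcoc : a - p.toFun y ∈ A.cocycles k :=
    ⟨Submodule.sub_mem _ ha (p.map_grading k y hy), LinearMap.mem_ker.2 <| by
      rw [map_sub, ← hea, p.map_d, sub_self]⟩
  obtain ⟨z, hz, hbz⟩ := hp.2 k _ hcoc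
  obtain ⟨c, hc, hdc⟩ := A.exists_d_eq_of_mem_cobounds hbz
  obtain ⟨x, hx, rfl⟩ := hsurj c hc
  refine ⟨y + z + P.d x, ?_, ?_, ?_⟩
  · exact Submodule.add_mem _ (Submodule.add_mem _ hy hz.1) (by simpa using P.d_mem hx)
  · rw [map_add, map_add, LinearMap.mem_ker.1 hz.2, P.d_sq, add_zero, add_zero]
  · rw [map_add, map_add, p.map_d, hdc]
    abel

namespace SullivanAlgebra

open CDGA

variable {T : SullivanAlgebra} {P A : CDGA} {p : Hom P A} {ψ : Hom T.toCDGA A}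

/-- On the elements of `s`, `χ` commutes with the differentials and lifts `ψ` through `p`. -/
def LiftsOn (p : Hom P A) (ψ : Hom T.toCDGA A) (χ : T.carrier →ₐ[ℚ] P.carrier)
    (s : Set T.carrier) : Prop :=
  ∀ x ∈ s, χ (T.d x) = P.d (χ x) ∧ p.toFun (χ x) = ψ.toFun x

theorem LiftsOn.adjoin {χ : T.carrier →ₐ[ℚ] P.carrier} (hχ : IsGraded (A := T.toCDGA) χ)
    {s : Set T.carrier} (hs : LiftsOn p ψ χ s) : LiftsOn p ψ χ (Algebra.adjoin ℚ s) := by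
  refine fun x hx => ⟨hχ.map_d_of_mem_adjoin (fun y hy => (hs y hy).1) hx, ?_⟩
  exact AlgHom.adjoin_le_equalizer (p.alg.comp χ) ψ.alg (fun y hy => (hs y hy).2) hx

theorem LiftsOn.congr {χ χ' : T.carrier →ₐ[ℚ] P.carrier} {s : Set T.carrier}
    (hχ' : LiftsOn p ψ χ' s) (heq : Set.EqOn χ χ' (Algebra.adjoin ℚ s))
    (hd : ∀ x ∈ s, T.d x ∈ Algebra.adjoin ℚ s) : LiftsOn p ψ χ s := by
  intro x hx
  rw [heq (hd x hx), heq (Algebra.subset_adjoin hx)]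
  exact hχ' x hx

theorem LiftsOn.exists_d_eq_map_eq (hp : QuasiIso p) {χ : T.carrier →ₐ[ℚ] P.carrier}
    (hχ : IsGraded (A := T.toCDGA) χ) {s : Set T.carrier} (hs : LiftsOn p ψ χ s) {k : ℤ}
    (hsurj : ∀ a ∈ A.grading (k - 1), ∃ x ∈ P.grading (k - 1), p.toFun x = a)
    {v : T.carrier} (hv : v ∈ T.grading k) (hdv : T.d v ∈ Algebra.adjoin ℚ s) :
    ∃ w ∈ P.grading k, P.d w = χ (T.d v) ∧ p.toFun w = ψ.toFun v := by
  obtain ⟨hχd, hpχ⟩ := hs.adjoin hχ _ hdv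
  refine hp.exists_d_eq_map_eq hsurj ⟨hχ _ _ (T.d_mem hv), LinearMap.mem_ker.2 ?_⟩
    (ψ.map_grading k v hv) (by rw [hpχ, ψ.map_d])
  rw [← hχd, T.d_sq, map_zero]

theorem TriangularBasis.exists_lift (β : T.TriangularBasis)
    {r : (Σ k, β.ι k) → (Σ k, β.ι k) → Prop} [IsTrans _ r] (hr : WellFounded r)
    (hd : ∀ i, T.d (β.vec i) ∈ Algebra.adjoin ℚ (β.vec '' {j | r j i}))
    (hp : QuasiIso p)
    (hsurj : ∀ i, ∀ χ : T.carrier →ₐ[ℚ] P.carrier, IsGraded (A := T.toCDGA) χ →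
      LiftsOn p ψ χ (β.vec '' {j | r j i}) →
      ∀ a ∈ A.grading (i.1 - 1), ∃ x ∈ P.grading (i.1 - 1), p.toFun x = a) :
    ∃ χ : Hom T.toCDGA P, ∀ x, p.toFun (χ.toFun x) = ψ.toFun x := by
  have hlower {i j} (hji : r j i) :
      Algebra.adjoin ℚ (β.vec '' {l | r l j}) ≤ Algebra.adjoin ℚ (β.vec '' {l | r l i}) :=
    Algebra.adjoin_mono (Set.image_mono fun l hl => _root_.trans hl hji)
  choose χ hχ hχv using fun w => β.exists_isGraded_eq (B := P) w
  obtain ⟨w, hw⟩ := exists_forall_of_local hr (D := fun i : Σ k, β.ι k => P.grading i.1)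
    (R := fun i w x => LiftsOn p ψ (χ w) (β.vec '' {j | r j i}) →
      P.d x = χ w (T.d (β.vec i)) ∧ p.toFun x = ψ.toFun (β.vec i))
    (fun i w => by
      by_cases hw : LiftsOn p ψ (χ w) (β.vec '' {j | r j i})
      · obtain ⟨x, hx, hdx⟩ := hw.exists_d_eq_map_eq hp (hχ w) (hsurj i _ (hχ w) hw)
          (β.vec_mem i) (hd i)
        exact ⟨⟨x, hx⟩, fun _ => hdx⟩
      · exact ⟨0, fun h => absurd h hw⟩)
    (fun i w w' x hww' hx hw' => by
      have heq : Set.EqOn (χ w) (χ w') (Algebra.adjoin ℚ (β.vec '' {j | r j i})) := by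
        refine AlgHom.adjoin_le_equalizer _ _ ?_
        rintro _ ⟨j, hj, rfl⟩
        rw [hχv, hχv, hww' j hj]
      rw [← heq (hd i)]
      refine hx (hw'.congr heq ?_)
      rintro _ ⟨j, hj, rfl⟩
      exact hlower hj (hd j))
  have hlift (i) : LiftsOn p ψ (χ w) {β.vec i} := by
    induction i using hr.induction with
    | _ i ih =>
      rintro _ rfl
      rw [hχv]
      refine (hw i ?_).imp_left Eq.symm
      rintro _ ⟨j, hj, rfl⟩
      exact ih j hj _ rfl
  have htop : LiftsOn p ψ (χ w) (Algebra.adjoin ℚ (Set.range β.vec)) :=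
    LiftsOn.adjoin (hχ w) (Set.forall_mem_range.2 fun i => hlift i _ rfl)
  rw [β.adjoin_range_vec] at htop
  exact ⟨Hom.ofAlgHom (χ w) (hχ w) fun x => (htop x trivial).1, fun x => (htop x trivial).2⟩

end SullivanAlgebra

/-! ### Minimal Sullivan algebras -/

theorem mul_mem_eigenspace {R A : Type*} [CommRing R] [Ring A] [Algebra R A] (σ : A →ₐ[R] A)
    {μ ν : R} {x y : A} (hx : x ∈ Module.End.eigenspace σ.toLinearMap μ)
    (hy : y ∈ Module.End.eigenspace σ.toLinearMap ν) :
    x * y ∈ Module.End.eigenspace σ.toLinearMap (μ * ν) := by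
  simp only [Module.End.mem_eigenspace_iff, AlgHom.toLinearMap_apply] at hx hy ⊢
  rw [map_mul, hx, hy, smul_mul_smul_comm]

namespace SullivanAlgebra

open CDGA
open scoped Pointwise

-- The endomorphism scaling `V` by `2` is multiplication by `2 ^ l` on the products of `l`
-- generators, so word length is detected by its eigenvalues.
theorem exists_Vtot_le_eigenspace (T : SullivanAlgebra) :
    ∃ σ : T.carrier →ₐ[ℚ] T.carrier, T.Vtot ≤ Module.End.eigenspace σ.toLinearMap 2 := by
  obtain ⟨σ, -, hσ⟩ := T.exists_isGraded_eq (B := T.toCDGA) (fun k => (2 : ℚ) • (T.V k).subtype)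
    fun k v => Submodule.smul_mem _ _ (T.V_le k v.2)
  exact ⟨σ, iSup_le fun k v hv => Module.End.mem_eigenspace_iff.2 (hσ k ⟨v, hv⟩)⟩

theorem exists_mem_eigenspace_of_mem_closure {T : SullivanAlgebra} {σ : T.carrier →ₐ[ℚ] T.carrier}
    (hσ : T.Vtot ≤ Module.End.eigenspace σ.toLinearMap 2) {x : T.carrier}
    (hx : x ∈ Submonoid.closure (T.Vtot : Set T.carrier)) :
    ∃ l : ℕ, x ∈ Module.End.eigenspace σ.toLinearMap (2 ^ l) := by
  induction hx using Submonoid.closure_induction with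
  | mem x hx => exact ⟨1, by simpa using hσ hx⟩
  | one => exact ⟨0, by simp⟩
  | mul x y _ _ hx hy =>
    obtain ⟨l, hl⟩ := hx
    obtain ⟨m, hm⟩ := hy
    exact ⟨l + m, pow_add (2 : ℚ) l m ▸ mul_mem_eigenspace σ hl hm⟩

theorem wedge_two_eq_span (T : SullivanAlgebra) :
    T.wedge 2 = Submodule.span ℚ
      (T.Vtot * T.Vtot * Submonoid.closure (T.Vtot : Set T.carrier) : Set T.carrier) := by
  have htop :
      Submodule.span ℚ (Submonoid.closure (T.Vtot : Set T.carrier) : Set T.carrier) = ⊤ := by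
    rw [← Algebra.adjoin_eq_span, Vtot, T.gen, Algebra.top_toSubmodule]
  rw [wedge, pow_two, ← htop, ← Submodule.span_mul_span, ← Submodule.span_mul_span,
    Submodule.span_eq]

theorem wedge_two_le_iSup_eigenspace {T : SullivanAlgebra} {σ : T.carrier →ₐ[ℚ] T.carrier}
    (hσ : T.Vtot ≤ Module.End.eigenspace σ.toLinearMap 2) :
    T.wedge 2 ≤ ⨆ (μ) (_ : μ ≠ 2), Module.End.eigenspace σ.toLinearMap μ := by
  rw [wedge_two_eq_span, Submodule.span_le]
  rintro _ ⟨_, ⟨a, ha, b, hb, rfl⟩, c, hc, rfl⟩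
  obtain ⟨l, hl⟩ := exists_mem_eigenspace_of_mem_closure hσ hc
  have hne : (2 : ℚ) * 2 * 2 ^ l ≠ 2 := by
    have : (1 : ℚ) ≤ 2 ^ l := one_le_pow₀ (by norm_num)
    intro h
    linarith
  exact Submodule.mem_iSup_of_mem _ (Submodule.mem_iSup_of_mem hne
    (mul_mem_eigenspace σ (mul_mem_eigenspace σ (hσ ha) (hσ hb)) hl))

theorem disjoint_Vtot_wedge_two (T : SullivanAlgebra) : Disjoint T.Vtot (T.wedge 2) := by
  obtain ⟨σ, hσ⟩ := T.exists_Vtot_le_eigenspace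
  exact (Module.End.eigenspaces_iSupIndep σ.toLinearMap 2).mono hσ
    (wedge_two_le_iSup_eigenspace hσ)

namespace TriangularBasis

variable {T : SullivanAlgebra} (β : T.TriangularBasis)

/-- The order on a triangular basis by degree first, then by rank. -/
def lt (j i : Σ k, β.ι k) : Prop := j.1 < i.1 ∨ j.1 = i.1 ∧ β.rank j < β.rank i

theorem lt_iff (j i : Σ k, β.ι k) :
    β.lt j i ↔ toLex (j.1.toNat, β.rank j) < toLex (i.1.toNat, β.rank i) := by
  have hj := β.one_le_degree j
  have hi := β.one_le_degree i
  rw [lt, Prod.Lex.toLex_lt_toLex]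
  dsimp only
  omega

instance : IsTrans _ β.lt where
  trans i j l hij hjl := (β.lt_iff i l).2 (((β.lt_iff i j).1 hij).trans ((β.lt_iff j l).1 hjl))

theorem wellFounded_lt : WellFounded β.lt :=
  Subrelation.wf (fun {j i} h => (β.lt_iff j i).1 h)
    (InvImage.wf (fun i : Σ k, β.ι k => toLex (i.1.toNat, β.rank i)) _root_.wellFounded_lt)

theorem mem_adjoin_of_mem_grading {m n : ℤ} (hmn : m < n) {x : T.carrier}
    (hx : x ∈ T.grading m) : x ∈ Algebra.adjoin ℚ (β.vec '' {j | j.1 < n}) := by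
  have hxg : x ∈ Algebra.adjoin ℚ (β.vec '' Set.univ) := by
    rw [Set.image_univ, β.adjoin_range_vec]
    trivial
  rcases le_or_gt m 0 with hm | hm
  · have h1 := mem_one_of_mem_adjoin β.vec_mem (fun i _ => β.one_le_degree i) hm hxg hx
    exact (Submodule.one_le.2 (Subalgebra.one_mem _) :
      1 ≤ Subalgebra.toSubmodule (Algebra.adjoin ℚ (β.vec '' {j | j.1 < n}))) h1
  · have hle : Submodule.span ℚ (β.vec '' {i ∈ Set.univ | i.1 = m}) ⊔
        decomposables ℚ β.vec Sigma.fst Set.univ m ≤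
          Subalgebra.toSubmodule (Algebra.adjoin ℚ (β.vec '' {j | j.1 < n})) := by
      refine sup_le ((Algebra.span_le_adjoin ℚ _).trans (Algebra.adjoin_mono ?_))
        (inf_le_left.trans (Algebra.adjoin_mono ?_))
      · exact Set.image_mono fun i hi => hi.2.trans_lt hmn
      · exact Set.image_mono fun i hi => hi.2.trans hmn
    exact hle (mem_sup_decomposables β.vec_mem (fun i _ => β.one_le_degree i) hm hxg hx)

theorem span_image_vec_le_Vtot (U : Set (Σ k, β.ι k)) : Submodule.span ℚ (β.vec '' U) ≤ T.Vtot :=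
  β.span_range_vec ▸ Submodule.span_mono (Set.image_subset_range _ _)

theorem d_mem_adjoin_lt {S : MinimalSullivanAlgebra} (β : S.TriangularBasis) (i : Σ k, β.ι k) :
    S.d (β.vec i) ∈ Algebra.adjoin ℚ (β.vec '' {j | β.lt j i}) := by
  obtain ⟨u, hu, y, ⟨hy, hy2⟩, huy⟩ := Submodule.mem_sup.1 <|
    mem_sup_decomposables β.vec_mem (U := {j | β.rank j < β.rank i})
      (fun j _ => β.one_le_degree j) (by linarith [β.one_le_degree i]) (β.d_vec_mem i)
      (S.d_mem (β.vec_mem i))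
  have hyw : y ∈ S.wedge 2 :=
    (mul_le_mul' (pow_le_pow_left' (β.span_image_vec_le_Vtot _) 2) le_rfl :
      _ ≤ S.Vtot ^ 2 * ⊤) hy2
  have hdw : u + y ∈ S.wedge 2 := huy ▸ S.minimal _ (S.V_le_Vtot _ (β.vec_mem_V i))
  have hu0 : u = 0 := Submodule.disjoint_def.1 S.disjoint_Vtot_wedge_two u
    (β.span_image_vec_le_Vtot _ hu) ((Submodule.add_mem_iff_left _ hyw).1 hdw)
  rw [← huy, hu0, zero_add]
  refine Algebra.adjoin_mono (Set.image_mono fun j hj => ?_) hy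
  have hj' : j.1 < i.1 + 1 := hj.2
  rcases (Int.lt_add_one_iff.1 hj').lt_or_eq with h | h
  exacts [Or.inl h, Or.inr ⟨h, hj.1⟩]

end TriangularBasis

theorem exists_lift_of_surjective (T : SullivanAlgebra) {P A : CDGA} {p : Hom P A}
    (hp : QuasiIso p) (hsurj : Function.Surjective p.toFun) (ψ : Hom T.toCDGA A) :
    ∃ χ : Hom T.toCDGA P, ∀ x, p.toFun (χ.toFun x) = ψ.toFun x := by
  obtain ⟨β⟩ := T.exists_triangularBasis
  have : IsTrans _ (InvImage (· < ·) β.rank) := ⟨fun _ _ _ => lt_trans⟩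
  refine β.exists_lift (InvImage.wf β.rank wellFounded_lt) β.d_vec_mem hp fun i _ _ _ a ha => ?_
  obtain ⟨x, rfl⟩ := hsurj a
  exact ⟨P.proj _ x, P.proj_mem _ x, by rw [p.map_proj, A.proj_self ha]⟩

end SullivanAlgebra

namespace MinimalSullivanAlgebra

open CDGA SullivanAlgebra

theorem exists_rightInverse_of_quasiIso (S : MinimalSullivanAlgebra) {P : CDGA}
    {p : Hom P S.toCDGA} (hp : QuasiIso p) :
    ∃ χ : Hom S.toCDGA P, Function.RightInverse χ.toFun p.toFun := by
  obtain ⟨β⟩ := S.exists_triangularBasis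
  refine β.exists_lift (ψ := Hom.id _) β.wellFounded_lt β.d_mem_adjoin_lt hp
    fun i χ hχ hlift a ha => ⟨χ a, hχ _ a ha, ?_⟩
  refine (hlift.adjoin hχ a (Algebra.adjoin_mono (Set.image_mono fun j hj => Or.inl hj)
    (β.mem_adjoin_of_mem_grading (sub_one_lt i.1) ha))).2

theorem isIso_of_quasiIso {S T : MinimalSullivanAlgebra} {χ : Hom T.toCDGA S.toCDGA}
    (hχ : QuasiIso χ) : IsIso χ := by
  obtain ⟨α, hα⟩ := S.exists_rightInverse_of_quasiIso hχ
  have hid : χ.comp α = Hom.id _ := Hom.ext hα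
  obtain ⟨γ, hγ⟩ := T.exists_rightInverse_of_quasiIso (hχ.of_comp_left (hid ▸ QuasiIso.id _))
  exact ⟨α, hα.leftInverse_of_surjective hγ.leftInverse.surjective, hα⟩

end MinimalSullivanAlgebra

/-! ### The cylinder -/

section Twist

variable {R : Type*} [Ring R] [Algebra ℚ R]

/-- The algebra `R` as a bimodule over itself, with left action twisted by `σ`. -/
def Twist (_σ : R →ₐ[ℚ] R) : Type _ := R

namespace Twist

variable (σ : R →ₐ[ℚ] R)

instance : AddCommGroup (Twist σ) := inferInstanceAs (AddCommGroup R)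

instance : Module ℚ (Twist σ) := inferInstanceAs (Module ℚ R)

instance : Module R (Twist σ) := Module.compHom R σ.toRingHom

instance : Module Rᵐᵒᵖ (Twist σ) := inferInstanceAs (Module Rᵐᵒᵖ R)

instance : SMulCommClass R Rᵐᵒᵖ (Twist σ) where
  smul_comm a b x := (mul_assoc (σ a) x b.unop).symm

instance : IsScalarTower ℚ R (Twist σ) where
  smul_assoc q a x := (congrArg (· * (show R from x)) (map_smul σ q a)).trans
    (smul_mul_assoc q (σ a) (show R from x))

instance : IsScalarTower ℚ Rᵐᵒᵖ (Twist σ) where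
  smul_assoc q a x := mul_smul_comm q (show R from x) a.unop

end Twist

/-- The algebra of sums `x + ε y` with `x, y ∈ R`, where `ε² = 0` and `x ε = ε σ(x)`. It hosts
both the forms `x + dt y` and the graphs `x + ε D x` of `σ`-derivations. -/
abbrev SkewExt (σ : R →ₐ[ℚ] R) : Type _ := TrivSqZeroExt R (Twist σ)

namespace SkewExt

variable {σ : R →ₐ[ℚ] R}

variable (σ) in
/-- The element `x + ε y`. -/
def mk : R × R →ₗ[ℚ] SkewExt σ where
  toFun x := x
  map_add' _ _ := rfl
  map_smul' _ _ := rfl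

/-- The coefficient of `1`. -/
def fstₗ : SkewExt σ →ₗ[ℚ] R := (TrivSqZeroExt.fstHom ℚ R (Twist σ)).toLinearMap

/-- The coefficient of `ε`. -/
def eps : SkewExt σ →ₗ[ℚ] R where
  toFun x := x.snd
  map_add' _ _ := rfl
  map_smul' _ _ := rfl

@[ext]
theorem ext {x y : SkewExt σ} (hfst : x.fst = y.fst) (heps : eps x = eps y) : x = y :=
  TrivSqZeroExt.ext hfst heps

@[simp]
theorem fst_mk (x : R × R) : (mk σ x).fst = x.1 := rfl

@[simp]
theorem eps_mk (x : R × R) : eps (mk σ x) = x.2 := rfl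

@[simp]
theorem eps_mul (x y : SkewExt σ) : eps (x * y) = σ x.fst * eps y + eps x * y.fst := rfl

end SkewExt

end Twist

namespace CDGA

theorem indep_of_proj {M : Type*} [AddCommGroup M] [Module ℚ M] {gr : ℤ → Submodule ℚ M}
    (π : ℤ → M →ₗ[ℚ] M) (hself : ∀ i, ∀ x ∈ gr i, π i x = x)
    (hne : ∀ i j, i ≠ j → ∀ x ∈ gr i, π j x = 0) (f : ℤ →₀ M) (hf : ∀ i, f i ∈ gr i)
    (hsum : (f.sum fun _ x => x) = 0) : f = 0 := by
  ext j
  have h := congrArg (π j) hsum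
  rw [map_zero, map_finsuppSum, Finsupp.sum, Finset.sum_eq_single j] at h
  · rwa [hself j _ (hf j)] at h
  · exact fun i _ hij => hne i j hij _ (hf i)
  · intro hj
    rw [Finsupp.notMem_support_iff.1 hj, map_zero]

theorem sgn_of_mem_sub_one (A : CDGA) {i : ℤ} {x : A.carrier} (hx : x ∈ A.grading (i - 1)) :
    A.sgn x = -((-1 : ℚ) ^ i • x) := by
  rw [A.sgn_of_mem hx, zpow_sub_one₀ (by norm_num)]
  simp

theorem mul_comm_of_mem (A : CDGA) {i j : ℤ} {x y : A.carrier} (hx : x ∈ A.grading i)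
    (hy : y ∈ A.grading (j - 1)) : A.sgn x * y = (-1 : ℚ) ^ (i * j) • (y * x) := by
  rw [A.sgn_of_mem hx, smul_mul_assoc, A.gcomm hx hy, smul_smul, ← zpow_add₀ (by norm_num)]
  congr 2
  ring

section SkewExt

variable (B : CDGA)

/-- The elements `x + ε y` of degree `n`, where `ε` has degree one. -/
def skewGrading (n : ℤ) : Submodule ℚ (SkewExt B.sgn) :=
  (B.grading n).comap SkewExt.fstₗ ⊓
    (B.grading (n - 1)).comap SkewExt.eps

theorem mem_skewGrading {n : ℤ} {x : SkewExt B.sgn} :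
    x ∈ B.skewGrading n ↔ x.fst ∈ B.grading n ∧ SkewExt.eps x ∈ B.grading (n - 1) :=
  Iff.rfl

theorem mk_mem_skewGrading {n : ℤ} {x y : B.carrier} (hx : x ∈ B.grading n)
    (hy : y ∈ B.grading (n - 1)) : SkewExt.mk B.sgn (x, y) ∈ B.skewGrading n :=
  ⟨hx, hy⟩

theorem iSup_skewGrading : ⨆ n, B.skewGrading n = ⊤ := by
  refine eq_top_iff.2 fun x _ => ?_
  have hfst (a : B.carrier) : SkewExt.mk B.sgn (a, 0) ∈ ⨆ n, B.skewGrading n := by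
    induction a using B.homogeneous_induction with
    | hom i a ha =>
      exact Submodule.mem_iSup_of_mem i (B.mk_mem_skewGrading ha (Submodule.zero_mem _))
    | add a b ha hb => simpa [← map_add] using Submodule.add_mem _ ha hb
  have heps (a : B.carrier) : SkewExt.mk B.sgn (0, a) ∈ ⨆ n, B.skewGrading n := by
    induction a using B.homogeneous_induction with
    | hom i a ha =>
      exact Submodule.mem_iSup_of_mem (i + 1)
        (B.mk_mem_skewGrading (Submodule.zero_mem _) (by rwa [add_sub_cancel_right]))
    | add a b ha hb => simpa [← map_add] using Submodule.add_mem _ ha hb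
  have hx : x = SkewExt.mk B.sgn (x.fst, 0) + SkewExt.mk B.sgn (0, SkewExt.eps x) := by
    ext <;> simp
  rw [hx]
  exact Submodule.add_mem _ (hfst _) (heps _)

theorem mul_mem_skewGrading {i j : ℤ} {x y : SkewExt B.sgn} (hx : x ∈ B.skewGrading i)
    (hy : y ∈ B.skewGrading j) : x * y ∈ B.skewGrading (i + j) := by
  rw [mem_skewGrading] at hx hy
  refine ⟨B.mul_mem hx.1 hy.1, ?_⟩
  refine Submodule.add_mem _ (?_ : B.sgn x.fst * SkewExt.eps y ∈ B.grading (i + j - 1))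
    (?_ : SkewExt.eps x * y.fst ∈ B.grading (i + j - 1))
  · rw [add_sub_assoc]
    exact B.mul_mem (B.sgn_mem hx.1) hy.2
  · rw [add_sub_right_comm]
    exact B.mul_mem hx.2 hy.1

theorem gcomm_of_mem_skewGrading {i j : ℤ} {x y : SkewExt B.sgn} (hx : x ∈ B.skewGrading i)
    (hy : y ∈ B.skewGrading j) : x * y = (-1 : ℚ) ^ (i * j) • (y * x) := by
  rw [mem_skewGrading] at hx hy
  ext
  · exact B.gcomm hx.1 hy.1
  · rw [map_smul, SkewExt.eps_mul, SkewExt.eps_mul, B.mul_comm_of_mem hy.1 hx.2,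
      B.mul_comm_of_mem hx.1 hy.2, smul_add, smul_smul, mul_comm j, ← mul_zpow, add_comm]
    simp

variable (θ : B.carrier →ₗ[ℚ] B.carrier)

/-- The differential `d (x + ε y) = d x + ε (θ x - d y)`, making `θ` null-homotopic. -/
def skewD : SkewExt B.sgn →ₗ[ℚ] SkewExt B.sgn :=
  SkewExt.mk B.sgn ∘ₗ ((B.d ∘ₗ SkewExt.fstₗ).prod
    (θ ∘ₗ SkewExt.fstₗ - B.d ∘ₗ SkewExt.eps))

theorem fst_skewD (x : SkewExt B.sgn) : (B.skewD θ x).fst = B.d x.fst := rfl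

theorem eps_skewD (x : SkewExt B.sgn) :
    SkewExt.eps (B.skewD θ x) = θ x.fst - B.d (SkewExt.eps x) := rfl

variable {θ}

theorem skewD_mul (hθ : ∀ x y, θ (x * y) = θ x * y + x * θ y) {i : ℤ} {x : SkewExt B.sgn}
    (hx : x ∈ B.skewGrading i) (y : SkewExt B.sgn) :
    B.skewD θ (x * y) = B.skewD θ x * y + (-1 : ℚ) ^ i • (x * B.skewD θ y) := by
  rw [mem_skewGrading] at hx
  have hfst : (-1 : ℚ) ^ i • x.fst = B.sgn x.fst := (B.sgn_of_mem hx.1).symm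
  have heps : (-1 : ℚ) ^ i • SkewExt.eps x = -B.sgn (SkewExt.eps x) := by
    rw [B.sgn_of_mem_sub_one hx.2, neg_neg]
  rw [← smul_mul_assoc]
  ext
  · simp only [TrivSqZeroExt.fst_add, TrivSqZeroExt.fst_mul, TrivSqZeroExt.fst_smul, fst_skewD,
      B.d_mul, hfst]
  · simp only [map_add, map_smul, SkewExt.eps_mul, TrivSqZeroExt.fst_mul, TrivSqZeroExt.fst_smul,
      fst_skewD, eps_skewD, B.d_mul, B.d_sgn, B.sgn_sgn, hθ, hfst, heps]
    noncomm_ring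

/-- The cdga of sums `x + ε y`, with `ε` of degree one, whose differential combines the one of
`B` with a derivation `θ` of degree zero. For the derivation `d/dt` of the polynomials in `t`,
the element `ε` is `dt`. -/
abbrev skewExt (θ : B.carrier →ₗ[ℚ] B.carrier) (hmem : ∀ i, ∀ x ∈ B.grading i, θ x ∈ B.grading i)
    (hmul : ∀ x y, θ (x * y) = θ x * y + x * θ y) (hd : ∀ x, θ (B.d x) = B.d (θ x)) : CDGA where
  carrier := SkewExt B.sgn
  grading := B.skewGrading
  spanning := B.iSup_skewGrading
  indep := indep_of_proj
    (fun n => SkewExt.mk B.sgn ∘ₗ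
      (B.proj n ∘ₗ SkewExt.fstₗ).prod
      (B.proj (n - 1) ∘ₗ SkewExt.eps))
    (fun _ _ hx => SkewExt.ext (B.proj_self hx.1) (B.proj_self hx.2))
    (fun _ _ hij _ hx => SkewExt.ext (B.proj_of_ne hij hx.1)
      (B.proj_of_ne (by simpa using hij) hx.2))
  one_mem := ⟨B.one_mem, Submodule.zero_mem _⟩
  mul_mem := B.mul_mem_skewGrading
  gcomm := B.gcomm_of_mem_skewGrading
  d := B.skewD θ
  d_mem {i x} hx := ⟨B.d_mem hx.1, Submodule.sub_mem _
    (by simpa using hmem i _ hx.1) (by simpa using B.d_mem hx.2)⟩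
  d_sq x := by
    ext
    · exact B.d_sq _
    · simp [eps_skewD, fst_skewD, hd, B.d_sq]
  leibniz := B.skewD_mul hmul

end SkewExt

end CDGA

section Polynomial

open Polynomial

theorem coeff_finsuppSum_monomial {R : Type*} [Ring R] (p : ℕ →₀ R) (k : ℕ) :
    (p.sum fun i a => monomial i a).coeff k = p k := by
  rw [Finsupp.sum, finsetSum_coeff, Finset.sum_eq_single k]
  · rw [coeff_monomial_same]
  · exact fun i _ hi => coeff_monomial_of_ne _ hi.symm
  · intro hk
    rw [Finsupp.notMem_support_iff.1 hk, monomial_zero_right, coeff_zero]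

variable {R S : Type*} [Ring R] [Algebra ℚ R] [Ring S] [Algebra ℚ S]

/-- The polynomials all of whose coefficients lie in `U`. -/
def coeffsIn (U : Submodule ℚ R) : Submodule ℚ R[X] where
  carrier := {p | ∀ k, p.coeff k ∈ U}
  add_mem' hp hq k := by simpa using Submodule.add_mem _ (hp k) (hq k)
  zero_mem' _ := by simp
  smul_mem' c p hp k := by simpa using Submodule.smul_mem _ c (hp k)

theorem monomial_mem_coeffsIn {U : Submodule ℚ R} (k : ℕ) {a : R} (ha : a ∈ U) :
    monomial k a ∈ coeffsIn U := fun i => by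
  rw [coeff_monomial]
  split_ifs
  exacts [ha, Submodule.zero_mem _]

theorem coeff_derivative_eq_smul (p : R[X]) (k : ℕ) :
    (derivative p).coeff k = ((k : ℚ) + 1) • p.coeff (k + 1) := by
  rw [coeff_derivative, ← Nat.cast_succ, ← nsmul_eq_mul', ← Nat.cast_smul_eq_nsmul ℚ,
    Nat.cast_succ]

theorem derivative_mem_coeffsIn {U : Submodule ℚ R} {p : R[X]} (hp : p ∈ coeffsIn U) :
    derivative p ∈ coeffsIn U := fun k => by
  rw [coeff_derivative_eq_smul]
  exact Submodule.smul_mem _ _ (hp _)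

/-- Application of a linear map to the coefficients of a polynomial. -/
def mapCoeff (f : R →ₗ[ℚ] S) : R[X] →ₗ[ℚ] S[X] :=
  lsum fun k => (monomial k).restrictScalars ℚ ∘ₗ f

theorem mapCoeff_monomial (f : R →ₗ[ℚ] S) (k : ℕ) (a : R) :
    mapCoeff f (monomial k a) = monomial k (f a) := by
  simp [mapCoeff, lsum]

theorem coeff_mapCoeff (f : R →ₗ[ℚ] S) (p : R[X]) (k : ℕ) :
    (mapCoeff f p).coeff k = f (p.coeff k) := by
  induction p using Polynomial.induction_on' with
  | add p q hp hq => simp only [map_add, coeff_add, hp, hq]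
  | monomial n a =>
    rw [mapCoeff_monomial, coeff_monomial, coeff_monomial]
    split_ifs <;> simp

theorem derivative_mapCoeff (f : R →ₗ[ℚ] S) (p : R[X]) :
    derivative (mapCoeff f p) = mapCoeff f (derivative p) := by
  ext k
  simp only [coeff_derivative_eq_smul, coeff_mapCoeff, map_smul]

/-- The primitive without constant term of a polynomial. -/
def primitive : R[X] →ₗ[ℚ] R[X] :=
  lsum fun k => ((k : ℚ) + 1)⁻¹ • (monomial (k + 1)).restrictScalars ℚ

theorem primitive_monomial (k : ℕ) (a : R) :
    primitive (monomial k a) = ((k : ℚ) + 1)⁻¹ • monomial (k + 1) a := by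
  simp [primitive, lsum]

theorem coeff_primitive_zero (p : R[X]) : (primitive p).coeff 0 = 0 := by
  induction p using Polynomial.induction_on' with
  | add p q hp hq => simp only [map_add, coeff_add, hp, hq, add_zero]
  | monomial n a => simp [primitive_monomial]

theorem coeff_primitive_succ (p : R[X]) (k : ℕ) :
    (primitive p).coeff (k + 1) = ((k : ℚ) + 1)⁻¹ • p.coeff k := by
  induction p using Polynomial.induction_on' with
  | add p q hp hq => simp only [map_add, coeff_add, hp, hq, smul_add]
  | monomial n a =>
    obtain rfl | h := eq_or_ne n k
    · simp [primitive_monomial]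
    · simp [primitive_monomial, coeff_monomial, h]

theorem derivative_primitive (p : R[X]) : derivative (primitive p) = p := by
  ext k
  have hk : (k : ℚ) + 1 ≠ 0 := by positivity
  rw [coeff_derivative_eq_smul, coeff_primitive_succ, smul_inv_smul₀ hk]

theorem primitive_derivative {p : R[X]} (hp : p.coeff 0 = 0) : primitive (derivative p) = p := by
  ext (_ | k)
  · rw [coeff_primitive_zero, hp]
  · have hk : (k : ℚ) + 1 ≠ 0 := by positivity
    rw [coeff_primitive_succ, coeff_derivative_eq_smul, inv_smul_smul₀ hk]

theorem primitive_mapCoeff (f : R →ₗ[ℚ] S) (p : R[X]) :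
    primitive (mapCoeff f p) = mapCoeff f (primitive p) := by
  ext (_ | k)
  · rw [coeff_mapCoeff, coeff_primitive_zero, coeff_primitive_zero, map_zero]
  · simp only [coeff_primitive_succ, coeff_mapCoeff, map_smul]

theorem primitive_mem_coeffsIn {U : Submodule ℚ R} {p : R[X]} (hp : p ∈ coeffsIn U) :
    primitive p ∈ coeffsIn U
  | 0 => by
    rw [coeff_primitive_zero]
    exact Submodule.zero_mem _
  | k + 1 => by
    rw [coeff_primitive_succ]
    exact Submodule.smul_mem _ _ (hp k)

end Polynomial

namespace CDGA

open Polynomial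

/-- The cdga `ℚ[t] ⊗ A`, where `dt = 0`. -/
abbrev poly (A : CDGA) : CDGA where
  carrier := A.carrier[X]
  grading n := coeffsIn (A.grading n)
  spanning := by
    rw [eq_top_iff]
    rintro p -
    induction p using Polynomial.induction_on' with
    | add p q hp hq => exact Submodule.add_mem _ hp hq
    | monomial m a =>
      induction a using A.homogeneous_induction with
      | hom i a ha => exact Submodule.mem_iSup_of_mem i (monomial_mem_coeffsIn m ha)
      | add a b ha hb => simpa only [map_add] using Submodule.add_mem _ ha hb
  indep := indep_of_proj (fun n => mapCoeff (A.proj n))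
    (fun _ _ hp => Polynomial.ext fun k => by rw [coeff_mapCoeff, A.proj_self (hp k)])
    (fun _ _ hij _ hp => Polynomial.ext fun k => by
      rw [coeff_mapCoeff, A.proj_of_ne hij (hp k), coeff_zero])
  one_mem := monomial_mem_coeffsIn 0 A.one_mem
  mul_mem hp hq k := by
    rw [coeff_mul]
    exact Submodule.sum_mem _ fun x _ => A.mul_mem (hp _) (hq _)
  gcomm hp hq := by
    ext k
    rw [coeff_smul, coeff_mul, coeff_mul, ← Finset.Nat.sum_antidiagonal_swap, Finset.smul_sum]
    exact Finset.sum_congr rfl fun x _ => A.gcomm (hp _) (hq _)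
  d := mapCoeff A.d
  d_mem hp k := by
    rw [coeff_mapCoeff]
    exact A.d_mem (hp k)
  d_sq p := by
    ext k
    rw [coeff_mapCoeff, coeff_mapCoeff, A.d_sq, coeff_zero]
  leibniz hp q := by
    ext k
    simp only [coeff_mapCoeff, coeff_add, coeff_smul, coeff_mul, map_sum, Finset.smul_sum,
      ← Finset.sum_add_distrib]
    exact Finset.sum_congr rfl fun x _ => A.leibniz (hp _) _

/-- The evaluation at `t = q`. -/
def polyEval (A : CDGA) (q : ℚ) : Hom A.poly A where
  toFun := eval₂RingHom' (RingHom.id A.carrier) (algebraMap ℚ A.carrier q)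
    fun a => (Algebra.commutes q a).symm
  map_smul c p := eval_smul _ _ _
  map_grading i p hp := by
    change eval _ p ∈ _
    rw [eval_eq_sum]
    refine Submodule.sum_mem _ fun k _ => ?_
    beta_reduce
    rw [← map_pow, ← Algebra.commutes, ← Algebra.smul_def]
    exact Submodule.smul_mem _ _ (hp k)
  map_d p := by
    change eval _ (mapCoeff A.d p) = A.d (eval _ p)
    induction p using Polynomial.induction_on' with
    | add p q hp hq => simp only [map_add, eval_add, hp, hq]
    | monomial n a =>
      simp only [mapCoeff_monomial, eval_monomial, ← map_pow, ← Algebra.commutes (q ^ n),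
        ← Algebra.smul_def, map_smul]

/-- The cdga `∧(t, dt) ⊗ A`, whose elements are the forms `p + dt q` with `p` and `q`
polynomials in `t`. Writing `dt` on the left keeps signs out of the differential. -/
abbrev cyl (A : CDGA) : CDGA :=
  A.poly.skewExt (derivative.restrictScalars ℚ) (fun _ _ => derivative_mem_coeffsIn)
    (fun _ _ => derivative_mul) (derivative_mapCoeff A.d)

/-- The evaluation at `t = q`. -/
def cylEval (A : CDGA) (q : ℚ) : Hom A.cyl A :=
  (A.polyEval q).comp
    { toFun := (TrivSqZeroExt.fstHom ℚ A.poly.carrier (Twist A.poly.sgn)).toRingHom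
      map_smul := fun _ _ => rfl
      map_grading := fun _ _ hx => hx.1
      map_d := fun _ => rfl }

/-- The inclusion of `A` into the cylinder. -/
def cylConst (A : CDGA) : Hom A A.cyl where
  toFun := (TrivSqZeroExt.inlHom A.poly.carrier (Twist A.poly.sgn)).comp (C : A.carrier →+* _)
  map_smul q a := congrArg (SkewExt.mk _) (Prod.ext (smul_C q a).symm (smul_zero q).symm)
  map_grading _ _ ha := ⟨monomial_mem_coeffsIn 0 ha, Submodule.zero_mem (coeffsIn _)⟩
  map_d a := SkewExt.ext (mapCoeff_monomial A.d 0 a).symm (by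
    change 0 = derivative (C a) - A.poly.d 0
    rw [derivative_C, map_zero, sub_zero])

theorem cylEval_apply (A : CDGA) (q : ℚ) (x : A.cyl.carrier) :
    (A.cylEval q).toFun x = eval (algebraMap ℚ A.carrier q) (TrivSqZeroExt.fst x) := rfl

theorem cylEval_zero (A : CDGA) (x : A.cyl.carrier) :
    (A.cylEval 0).toFun x = coeff (TrivSqZeroExt.fst x) 0 := by
  rw [cylEval_apply, map_zero, coeff_zero_eq_eval_zero]

theorem cylEval_cylConst (A : CDGA) (q : ℚ) (a : A.carrier) :
    (A.cylEval q).toFun (A.cylConst.toFun a) = a :=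
  eval_C (a := a)

/-- The form `t`. -/
def cylT (A : CDGA) : A.cyl.carrier := SkewExt.mk A.poly.sgn (X, 0)

theorem cylEval_cylT (A : CDGA) (q : ℚ) :
    (A.cylEval q).toFun A.cylT = algebraMap ℚ A.carrier q :=
  eval_X (x := algebraMap ℚ A.carrier q)

theorem cylConst_mul_cylT_pow (A : CDGA) (a : A.carrier) (k : ℕ) :
    A.cylConst.toFun a * A.cylT ^ k = SkewExt.mk A.poly.sgn (monomial k a, 0) := by
  let inl := TrivSqZeroExt.inlHom A.poly.carrier (Twist A.poly.sgn)
  rw [← C_mul_X_pow_eq_monomial]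
  exact (congrArg (inl (C a) * ·) (map_pow inl X k).symm).trans (map_mul inl (C a) (X ^ k)).symm

theorem d_cylT (A : CDGA) : A.cyl.d A.cylT = SkewExt.mk A.poly.sgn (0, 1) := by
  have hfst : mapCoeff A.d X = 0 := by
    rw [← monomial_one_one_eq_X, mapCoeff_monomial, A.d_one, monomial_zero_right]
  have heps : derivative (X : A.carrier[X]) - mapCoeff A.d 0 = 1 := by
    rw [derivative_X, map_zero, sub_zero]
  exact SkewExt.ext hfst heps

theorem cylConst_mul_cylT_pow_mul_d (A : CDGA) (a : A.carrier) (k : ℕ) :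
    A.cylConst.toFun a * A.cylT ^ k * A.cyl.d A.cylT =
      SkewExt.mk A.poly.sgn (0, A.poly.sgn (monomial k a)) := by
  rw [cylConst_mul_cylT_pow, d_cylT]
  refine SkewExt.ext ?_ ?_ <;> simp

theorem sum_cylConst_mul_cylT_pow (A : CDGA) (p q : ℕ →₀ A.carrier) :
    ((p.sum fun k a => A.cylConst.toFun a * A.cylT ^ k) +
      q.sum fun k a => A.cylConst.toFun a * A.cylT ^ k * A.cyl.d A.cylT) =
    SkewExt.mk A.poly.sgn
      (p.sum fun k a => monomial k a, A.poly.sgn (q.sum fun k a => monomial k a)) := by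
  have hp : (p.sum fun k a => A.cylConst.toFun a * A.cylT ^ k) =
      SkewExt.mk A.poly.sgn (p.sum fun k a => monomial k a, 0) :=
    (congrArg p.sum (funext₂ fun k a => A.cylConst_mul_cylT_pow a k)).trans
      (map_finsuppSum (SkewExt.mk A.poly.sgn ∘ₗ LinearMap.inl ℚ _ _) p _).symm
  have hq : (q.sum fun k a => A.cylConst.toFun a * A.cylT ^ k * A.cyl.d A.cylT) =
      SkewExt.mk A.poly.sgn (0, A.poly.sgn (q.sum fun k a => monomial k a)) :=
    (congrArg q.sum (funext₂ fun k a => A.cylConst_mul_cylT_pow_mul_d a k)).trans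
      (map_finsuppSum
        (SkewExt.mk A.poly.sgn ∘ₗ LinearMap.inr ℚ _ _ ∘ₗ A.poly.sgn.toLinearMap) q _).symm
  rw [hp, hq, ← map_add, Prod.mk_add_mk, add_zero, zero_add]

/-- The cylinder `∧(t, dt) ⊗ A`. -/
def cylinder (A : CDGA) : Cylinder A where
  C := A.cyl
  ι := A.cylConst
  t := A.cylT
  t_mem := ⟨by
    change X ∈ coeffsIn (A.grading 0)
    rw [← monomial_one_one_eq_X]
    exact monomial_mem_coeffsIn 1 A.one_mem, Submodule.zero_mem (coeffsIn _)⟩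
  ε₀ := A.cylEval 0
  ε₁ := A.cylEval 1
  ε₀_ι := A.cylEval_cylConst 0
  ε₁_ι := A.cylEval_cylConst 1
  ε₀_t := (A.cylEval_cylT 0).trans (map_zero _)
  ε₁_t := (A.cylEval_cylT 1).trans (map_one _)
  basis c := by
    let F (p : A.carrier[X]) : ℕ →₀ A.carrier :=
      Finsupp.onFinset p.support p.coeff fun k hk => mem_support_iff.2 hk
    have sum_F (p : A.carrier[X]) : ((F p).sum fun k a => monomial k a) = p :=
      Polynomial.ext (coeff_finsuppSum_monomial (F p))
    have F_sum (f : ℕ →₀ A.carrier) : F (f.sum fun k a => monomial k a) = f :=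
      Finsupp.ext (coeff_finsuppSum_monomial f)
    refine ⟨(F (TrivSqZeroExt.fst c), F (A.poly.sgn (SkewExt.eps c))), ?_, ?_⟩
    · beta_reduce
      rw [sum_cylConst_mul_cylT_pow, sum_F, sum_F, A.poly.sgn_sgn]
      rfl
    · rintro ⟨p, q⟩ rfl
      rw [sum_cylConst_mul_cylT_pow, SkewExt.fst_mk, SkewExt.eps_mk, A.poly.sgn_sgn, F_sum, F_sum]
  grading_compat n p q hp hq := by
    rw [sum_cylConst_mul_cylT_pow]
    refine A.poly.mk_mem_skewGrading (fun k => ?_) (A.poly.sgn_mem fun k => ?_)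
    · rw [coeff_finsuppSum_monomial]
      exact hp k
    · rw [coeff_finsuppSum_monomial]
      exact hq k

/-- Integration over `t` contracts the forms which vanish at `t = 0`. -/
theorem exists_d_eq_of_cylEval_zero_eq_zero (A : CDGA) {n : ℤ} {x : A.cyl.carrier}
    (hx : x ∈ A.cyl.cocycles n) (hx0 : (A.cylEval 0).toFun x = 0) :
    ∃ y ∈ A.cyl.grading (n - 1), A.cyl.d y = x ∧ (A.cylEval 0).toFun y = 0 := by
  obtain ⟨⟨-, hq⟩, hd⟩ := hx
  rw [cylEval_zero] at hx0
  have hpq : derivative (TrivSqZeroExt.fst x) = mapCoeff A.d (SkewExt.eps x) :=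
    sub_eq_zero.1 (congrArg SkewExt.eps (LinearMap.mem_ker.1 hd))
  refine ⟨SkewExt.mk A.poly.sgn (primitive (SkewExt.eps x), 0),
    ⟨primitive_mem_coeffsIn hq, Submodule.zero_mem (coeffsIn _)⟩, SkewExt.ext ?_ ?_, ?_⟩
  · change mapCoeff A.d (primitive (SkewExt.eps x)) = TrivSqZeroExt.fst x
    rw [← primitive_mapCoeff, ← hpq, primitive_derivative hx0]
  · change derivative (primitive (SkewExt.eps x)) - mapCoeff A.d 0 = SkewExt.eps x
    rw [derivative_primitive, map_zero, sub_zero]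
  · rw [cylEval_zero]
    exact coeff_primitive_zero _

end CDGA

/-! ### Uniqueness of minimal models -/

namespace CDGA

/-- The product of two cdga's. -/
def prod (A B : CDGA) : CDGA where
  carrier := A.carrier × B.carrier
  grading k := (A.grading k).prod (B.grading k)
  spanning := by
    rw [eq_top_iff]
    rintro ⟨a, b⟩ -
    have ha : ((a, 0) : A.carrier × B.carrier) ∈ ⨆ k, (A.grading k).prod (B.grading k) := by
      induction a using A.homogeneous_induction with
      | hom i a ha => exact Submodule.mem_iSup_of_mem i ⟨ha, Submodule.zero_mem _⟩
      | add x y hx hy => simpa using Submodule.add_mem _ hx hy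
    have hb : ((0, b) : A.carrier × B.carrier) ∈ ⨆ k, (A.grading k).prod (B.grading k) := by
      induction b using B.homogeneous_induction with
      | hom i b hb => exact Submodule.mem_iSup_of_mem i ⟨Submodule.zero_mem _, hb⟩
      | add x y hx hy => simpa using Submodule.add_mem _ hx hy
    simpa using Submodule.add_mem _ ha hb
  indep := indep_of_proj (fun k => (A.proj k).prodMap (B.proj k))
    (fun i x hx => Prod.ext (A.proj_self hx.1) (B.proj_self hx.2))
    (fun i j hij x hx => Prod.ext (A.proj_of_ne hij hx.1) (B.proj_of_ne hij hx.2))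
  one_mem := ⟨A.one_mem, B.one_mem⟩
  mul_mem ha hb := ⟨A.mul_mem ha.1 hb.1, B.mul_mem ha.2 hb.2⟩
  gcomm ha hb := Prod.ext (A.gcomm ha.1 hb.1) (B.gcomm ha.2 hb.2)
  d := A.d.prodMap B.d
  d_mem ha := ⟨A.d_mem ha.1, B.d_mem ha.2⟩
  d_sq a := Prod.ext (A.d_sq _) (B.d_sq _)
  leibniz ha b := Prod.ext (A.leibniz ha.1 _) (B.leibniz ha.2 _)

/-- The first projection of a product. -/
def Hom.fst (A B : CDGA) : Hom (A.prod B) A where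
  toFun := RingHom.fst _ _
  map_smul _ _ := rfl
  map_grading _ _ h := h.1
  map_d _ := rfl

/-- The second projection of a product. -/
def Hom.snd (A B : CDGA) : Hom (A.prod B) B where
  toFun := RingHom.snd _ _
  map_smul _ _ := rfl
  map_grading _ _ h := h.2
  map_d _ := rfl

/-- The cdga structure on a graded subalgebra stable under the differential. -/
def sub (A : CDGA) (B : Subalgebra ℚ A.carrier) (hp : ∀ k, ∀ x ∈ B, A.proj k x ∈ B)
    (hd : ∀ x ∈ B, A.d x ∈ B) : CDGA where
  carrier := B
  grading k := (A.grading k).comap B.val.toLinearMap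
  spanning := by
    classical
    refine eq_top_iff.2 fun x _ => ?_
    have hx : x = ∑ k ∈ (DirectSum.decompose A.grading x.1).support,
        (⟨A.proj k x.1, hp k _ x.2⟩ : B) := by
      apply Subtype.ext
      rw [AddSubmonoidClass.coe_finsetSum]
      exact (DirectSum.sum_support_decompose A.grading x.1).symm
    rw [hx]
    exact Submodule.sum_mem _ fun k _ => Submodule.mem_iSup_of_mem k (A.proj_mem k x.1)
  indep := indep_of_proj
    (fun k => (A.proj k).restrict (p := Subalgebra.toSubmodule B) (q := Subalgebra.toSubmodule B)
      (hp k))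
    (fun i x hx => Subtype.ext (A.proj_self hx))
    (fun i j hij x hx => Subtype.ext (A.proj_of_ne hij hx))
  one_mem := A.one_mem
  mul_mem ha hb := A.mul_mem ha hb
  gcomm ha hb := Subtype.ext (A.gcomm ha hb)
  d := A.d.restrict (p := Subalgebra.toSubmodule B) (q := Subalgebra.toSubmodule B) hd
  d_mem ha := A.d_mem ha
  d_sq a := Subtype.ext (A.d_sq a.1)
  leibniz ha b := Subtype.ext (A.leibniz ha b.1)

/-- The inclusion of a sub-cdga. -/
def Hom.ofSub (A : CDGA) (B : Subalgebra ℚ A.carrier) (hp : ∀ k, ∀ x ∈ B, A.proj k x ∈ B)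
    (hd : ∀ x ∈ B, A.d x ∈ B) : Hom (A.sub B hp hd) A where
  toFun := B.val.toRingHom
  map_smul _ _ := rfl
  map_grading _ _ h := h
  map_d _ := rfl

section Path

variable {S A : CDGA} (φ : Hom S A)

/-- The pairs `(s, c)` in `S × (∧(t,dt) ⊗ A)` with `φ s = ε₀ c`. -/
def pathSubalgebra : Subalgebra ℚ (S.prod A.cyl).carrier :=
  AlgHom.equalizer (φ.comp (Hom.fst S A.cyl)).alg ((A.cylEval 0).comp (Hom.snd S A.cyl)).alg

theorem mem_pathSubalgebra {x : (S.prod A.cyl).carrier} :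
    x ∈ pathSubalgebra φ ↔ φ.toFun ((Hom.fst S A.cyl).toFun x) =
      (A.cylEval 0).toFun ((Hom.snd S A.cyl).toFun x) := Iff.rfl

/-- The path object factoring `φ` into a quasi-isomorphism followed by a surjection. -/
def path : CDGA :=
  (S.prod A.cyl).sub (pathSubalgebra φ)
    (fun k x hx => by
      rw [mem_pathSubalgebra] at hx ⊢
      rw [Hom.map_proj, Hom.map_proj, Hom.map_proj, Hom.map_proj, hx])
    (fun x hx => by
      rw [mem_pathSubalgebra] at hx ⊢
      rw [Hom.map_d, Hom.map_d, Hom.map_d, Hom.map_d, hx])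

/-- The component in `S` of the path object. -/
def pathFst : Hom (path φ) S :=
  (Hom.fst S A.cyl).comp (Hom.ofSub _ _ _ _)

/-- The component in `∧(t,dt) ⊗ A` of the path object. -/
def pathSnd : Hom (path φ) A.cyl :=
  (Hom.snd S A.cyl).comp (Hom.ofSub _ _ _ _)

theorem pathFst_eq (x : (path φ).carrier) :
    φ.toFun ((pathFst φ).toFun x) = (A.cylEval 0).toFun ((pathSnd φ).toFun x) := x.2

/-- The constant paths. -/
def pathConst : Hom S (path φ) where
  toFun := ((RingHom.id S.carrier).prod (A.cylConst.comp φ).toFun).codRestrict (pathSubalgebra φ)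
    fun s => (mem_pathSubalgebra φ).2 (A.cylEval_cylConst 0 (φ.toFun s)).symm
  map_smul q x := Subtype.ext (Prod.ext rfl ((A.cylConst.comp φ).map_smul q x))
  map_grading i x h := ⟨h, (A.cylConst.comp φ).map_grading i x h⟩
  map_d x := Subtype.ext (Prod.ext rfl ((A.cylConst.comp φ).map_d x))

theorem mem_cobounds_of_pathFst_eq_zero {n : ℤ} {x : (path φ).carrier}
    (hx : x ∈ (path φ).cocycles n) (hx0 : (pathFst φ).toFun x = 0) : x ∈ (path φ).cobounds n := by
  obtain ⟨c, -, hdc, hc0⟩ :=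
    A.exists_d_eq_of_cylEval_zero_eq_zero ((pathSnd φ).map_cocycles hx) (by
      rw [← pathFst_eq, hx0, map_zero])
  exact ⟨hx.1, ⟨((0 : S.carrier), c), (mem_pathSubalgebra φ).2 ((map_zero φ.toFun).trans hc0.symm)⟩,
    Subtype.ext (Prod.ext ((map_zero S.d).trans hx0.symm) hdc)⟩

theorem quasiIso_pathFst : QuasiIso (pathFst φ) := by
  refine ⟨fun n x hx hb => ?_, fun n s hs => ⟨(pathConst φ).toFun s,
    (pathConst φ).map_cocycles hs, ?_⟩⟩
  · obtain ⟨s, hs, hds⟩ := S.exists_d_eq_of_mem_cobounds hb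
    have hdc := (path φ).d_mem_cobounds ((pathConst φ).map_grading _ _ hs)
    have h := mem_cobounds_of_pathFst_eq_zero φ
      (Submodule.sub_mem _ hx ((path φ).cobounds_le_cocycles n hdc)) (by
        rw [map_sub, ← hds, (pathFst φ).map_d]
        exact sub_self _)
    simpa only [sub_add_cancel] using Submodule.add_mem _ h hdc
  · have h : (pathFst φ).toFun ((pathConst φ).toFun s) = s := rfl
    rw [h, sub_self]
    exact Submodule.zero_mem _

theorem quasiIso_pathConst : QuasiIso (pathConst φ) :=
  (quasiIso_pathFst φ).of_comp_left (QuasiIso.id S)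

theorem surjective_pathSnd : Function.Surjective ((A.cylEval 1).comp (pathSnd φ)).toFun := by
  intro a
  refine ⟨⟨((0 : S.carrier), A.cylConst.toFun a * A.cylT), (mem_pathSubalgebra φ).2 ?_⟩, ?_⟩
  · change φ.toFun 0 = (A.cylEval 0).toFun (A.cylConst.toFun a * A.cylT)
    rw [map_zero, map_mul, cylEval_cylT, map_zero, mul_zero]
  · change (A.cylEval 1).toFun (A.cylConst.toFun a * A.cylT) = a
    rw [map_mul, cylEval_cylConst, cylEval_cylT, map_one, mul_one]

end Path

theorem exists_isIso_homotopic {A : CDGA} (S T : MinimalSullivanAlgebra) (φ : Hom S.toCDGA A)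
    (ψ : Hom T.toCDGA A) (hφ : QuasiIso φ) (hψ : QuasiIso ψ) :
    ∃ χ : Hom T.toCDGA S.toCDGA, IsIso χ ∧ Homotopic (φ.comp χ) ψ := by
  have hc : ((A.cylEval 1).comp (pathSnd φ)).comp (pathConst φ) = φ :=
    Hom.ext fun s => A.cylEval_cylConst 1 (φ.toFun s)
  have hq : QuasiIso ((A.cylEval 1).comp (pathSnd φ)) :=
    (quasiIso_pathConst φ).of_comp_right (by rwa [hc])
  obtain ⟨Θ, hΘ⟩ := T.exists_lift_of_surjective hq (surjective_pathSnd φ) ψ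
  have hΘψ : ((A.cylEval 1).comp (pathSnd φ)).comp Θ = ψ := Hom.ext hΘ
  have hΘq : QuasiIso Θ := hq.of_comp_left (by rwa [hΘψ])
  refine ⟨(pathFst φ).comp Θ, MinimalSullivanAlgebra.isIso_of_quasiIso
    ((quasiIso_pathFst φ).comp hΘq), A.cylinder, (pathSnd φ).comp Θ,
    fun x => (pathFst_eq φ (Θ.toFun x)).symm, hΘ⟩

end CDGA

/-! ### Free graded commutative algebras -/

theorem iSup_eq_top_of_adjoin_eq_top {R A : Type*} [CommRing R] [Ring A] [Algebra R A] {s : Set A}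
    (hs : Algebra.adjoin R s = ⊤) {W : ℤ → Submodule R A} [SetLike.GradedMonoid W]
    (hW : ∀ x ∈ s, ∃ n, x ∈ W n) : ⨆ n, W n = ⊤ := by
  have hle : Algebra.adjoin R s ≤ (DirectSum.coeAlgHom W).range := Algebra.adjoin_le fun x hx =>
    have ⟨n, hn⟩ := hW x hx
    ⟨DirectSum.of _ n ⟨x, hn⟩, DirectSum.coeAlgHom_of W n _⟩
  rw [Submodule.iSup_eq_toSubmodule_range, top_le_iff.1 (hs.ge.trans hle), Algebra.top_toSubmodule]

section FreeGC

variable {I : Type} (deg : I → ℤ)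

/-- The relations of graded commutativity between generators. -/
inductive FreeGCRel : FreeAlgebra ℚ I → FreeAlgebra ℚ I → Prop
  | comm (i j : I) : FreeGCRel (FreeAlgebra.ι ℚ i * FreeAlgebra.ι ℚ j)
      ((-1 : ℚ) ^ (deg i * deg j) • (FreeAlgebra.ι ℚ j * FreeAlgebra.ι ℚ i))

/-- The free graded commutative algebra on generators of prescribed degrees. -/
abbrev FreeGC : Type := RingQuot (FreeGCRel deg)

namespace FreeGC

/-- The generators. -/
def gen (i : I) : FreeGC deg := RingQuot.mkAlgHom ℚ (FreeGCRel deg) (FreeAlgebra.ι ℚ i)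

theorem gen_mul_gen (i j : I) :
    gen deg i * gen deg j = (-1 : ℚ) ^ (deg i * deg j) • (gen deg j * gen deg i) := by
  rw [gen, gen, ← map_mul, RingQuot.mkAlgHom_rel ℚ (FreeGCRel.comm i j), map_smul, map_mul]

variable {deg} in
/-- The universal property of the free graded commutative algebra. -/
def lift {B : Type*} [Ring B] [Algebra ℚ B] (f : I → B)
    (hf : ∀ i j, f i * f j = (-1 : ℚ) ^ (deg i * deg j) • (f j * f i)) : FreeGC deg →ₐ[ℚ] B :=
  RingQuot.liftAlgHom ℚ ⟨FreeAlgebra.lift ℚ f, fun _ _ ⟨i, j⟩ => by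
    simp only [map_mul, map_smul, FreeAlgebra.lift_ι_apply, hf i j]⟩

@[simp]
theorem lift_gen {B : Type*} [Ring B] [Algebra ℚ B] (f : I → B)
    (hf : ∀ i j, f i * f j = (-1 : ℚ) ^ (deg i * deg j) • (f j * f i)) (i : I) :
    lift f hf (gen deg i) = f i := by
  rw [lift, gen, RingQuot.liftAlgHom_mkAlgHom_apply, FreeAlgebra.lift_ι_apply]

theorem adjoin_range_gen : Algebra.adjoin ℚ (Set.range (gen deg)) = ⊤ := by
  rw [show gen deg = RingQuot.mkAlgHom ℚ (FreeGCRel deg) ∘ FreeAlgebra.ι ℚ from rfl,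
    Set.range_comp, ← AlgHom.map_adjoin, FreeAlgebra.adjoin_range_ι, Algebra.map_top,
    AlgHom.range_eq_top]
  exact RingQuot.mkAlgHom_surjective ℚ _

variable {deg} in
theorem algHom_ext {B : Type*} [Ring B] [Algebra ℚ B] {f g : FreeGC deg →ₐ[ℚ] B}
    (h : ∀ i, f (gen deg i) = g (gen deg i)) : f = g :=
  AlgHom.ext_of_adjoin_eq_top (adjoin_range_gen deg) (Set.forall_mem_range.2 h)

theorem cardinalMk_le {K : Type} [Infinite K] (hI : Cardinal.mk I ≤ Cardinal.mk K) :
    Cardinal.mk (FreeGC deg) ≤ Cardinal.mk K := by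
  have hK := Cardinal.aleph0_le_mk K
  calc Cardinal.mk (FreeGC deg)
      ≤ Cardinal.mk (FreeAlgebra ℚ I) :=
        Cardinal.mk_le_of_surjective (RingQuot.mkAlgHom_surjective ℚ (FreeGCRel deg))
    _ ≤ Cardinal.mk ℚ ⊔ Cardinal.mk I ⊔ Cardinal.aleph0 := FreeAlgebra.cardinalMk_le_max ℚ I
    _ ≤ Cardinal.mk K := max_le (max_le (Cardinal.mk_le_aleph0.trans hK) hI) hK

/-- The coaction of `ℚ[ℤ]` which records degrees. -/
def coact : FreeGC deg →ₐ[ℚ] AddMonoidAlgebra (FreeGC deg) ℤ :=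
  lift (fun i => AddMonoidAlgebra.single (deg i) (gen deg i)) fun i j => by
    rw [AddMonoidAlgebra.single_mul_single, AddMonoidAlgebra.single_mul_single,
      gen_mul_gen, AddMonoidAlgebra.smul_single, add_comm]

/-- The homogeneous elements of degree `n`. -/
def gr (n : ℤ) : Submodule ℚ (FreeGC deg) where
  carrier := {x | coact deg x = AddMonoidAlgebra.single n x}
  add_mem' {x y} (hx : _ = _) (hy : _ = _) := by
    rw [Set.mem_ofPred_eq, map_add, hx, hy, AddMonoidAlgebra.single_add]
  zero_mem' := by rw [Set.mem_ofPred_eq, map_zero, AddMonoidAlgebra.single_zero]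
  smul_mem' c x (hx : _ = _) := by
    rw [Set.mem_ofPred_eq, map_smul, hx, AddMonoidAlgebra.smul_single]

variable {deg} in
theorem mem_gr {n : ℤ} {x : FreeGC deg} :
    x ∈ gr deg n ↔ coact deg x = AddMonoidAlgebra.single n x := Iff.rfl

theorem gen_mem_gr (i : I) : gen deg i ∈ gr deg (deg i) := lift_gen deg _ _ i

instance : SetLike.GradedMonoid (gr deg) where
  one_mem := by
    rw [mem_gr, map_one]
    rfl
  mul_mem m n x y hx hy := by
    rw [mem_gr] at *
    rw [map_mul, hx, hy, AddMonoidAlgebra.single_mul_single]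

/-- The projection onto the homogeneous elements of degree `n`. -/
def grProj (n : ℤ) : FreeGC deg →ₗ[ℚ] FreeGC deg where
  toFun x := (coact deg x).coeff n
  map_add' x y := by rw [map_add]; rfl
  map_smul' c x := by rw [map_smul]; rfl

theorem grProj_self {n : ℤ} {x : FreeGC deg} (hx : x ∈ gr deg n) : grProj deg n x = x := by
  change (coact deg x).coeff n = x
  rw [mem_gr.1 hx, AddMonoidAlgebra.coeff_single, Finsupp.single_eq_same]

theorem grProj_of_ne {m n : ℤ} (hmn : m ≠ n) {x : FreeGC deg} (hx : x ∈ gr deg m) :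
    grProj deg n x = 0 := by
  change (coact deg x).coeff n = 0
  rw [mem_gr.1 hx, AddMonoidAlgebra.coeff_single, Finsupp.single_eq_of_ne hmn.symm]

theorem iSup_gr : ⨆ n, gr deg n = ⊤ :=
  iSup_eq_top_of_adjoin_eq_top (adjoin_range_gen deg)
    (Set.forall_mem_range.2 fun i => ⟨_, gen_mem_gr deg i⟩)

variable {deg} in
theorem gr_le {W : ℤ → Submodule ℚ (FreeGC deg)} (hone : 1 ∈ W 0)
    (hmul : ∀ i j, ∀ x ∈ gr deg i, ∀ y ∈ gr deg j, x ∈ W i → y ∈ W j → x * y ∈ W (i + j))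
    (hgen : ∀ i, gen deg i ∈ W (deg i)) (n : ℤ) : gr deg n ≤ W n := by
  let _ : SetLike.GradedMonoid fun n => W n ⊓ gr deg n :=
    { one_mem := ⟨hone, SetLike.one_mem_graded _⟩
      mul_mem := fun i j x y hx hy => ⟨hmul i j x hx.2 y hy.2 hx.1 hy.1,
        SetLike.mul_mem_graded hx.2 hy.2⟩ }
  have htop : ⨆ n, W n ⊓ gr deg n = ⊤ :=
    iSup_eq_top_of_adjoin_eq_top (W := fun n => W n ⊓ gr deg n) (adjoin_range_gen deg)
      (Set.forall_mem_range.2 fun i => ⟨_, hgen i, gen_mem_gr deg i⟩)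
  have hproj : ⨆ n, W n ⊓ gr deg n ≤ (W n).comap (grProj deg n) := iSup_le fun i y hy => by
    rw [Submodule.mem_comap]
    obtain rfl | hi := eq_or_ne i n
    · rw [grProj_self deg hy.2]
      exact hy.1
    · rw [grProj_of_ne deg hi hy.2]
      exact Submodule.zero_mem _
  intro x hx
  rw [← grProj_self deg hx]
  exact hproj (htop ▸ Submodule.mem_top)

variable {deg} in
theorem gcomm {m n : ℤ} {x y : FreeGC deg} (hx : x ∈ gr deg m) (hy : y ∈ gr deg n) :
    x * y = (-1 : ℚ) ^ (m * n) • (y * x) := by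
  let commRight (i : I) (n : ℤ) : Submodule ℚ (FreeGC deg) :=
    LinearMap.eqLocus (LinearMap.mulLeft ℚ (gen deg i))
      ((-1 : ℚ) ^ (deg i * n) • LinearMap.mulRight ℚ (gen deg i))
  have gen_comm (i : I) : ∀ n, gr deg n ≤ commRight i n := gr_le
    (by simp [commRight]) (fun m n x _ y _ hx hy => by
      simp only [commRight, LinearMap.mem_eqLocus, LinearMap.smul_apply, LinearMap.mulLeft_apply,
        LinearMap.mulRight_apply] at *
      rw [← mul_assoc, hx, smul_mul_assoc, mul_assoc, hy, mul_smul_comm, smul_smul,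
        ← zpow_add₀ (by norm_num), mul_add, mul_assoc])
    (fun j => gen_mul_gen deg i j)
  let commLeft (m : ℤ) : Submodule ℚ (FreeGC deg) :=
    LinearMap.eqLocus (LinearMap.mulRight ℚ y) ((-1 : ℚ) ^ (m * n) • LinearMap.mulLeft ℚ y)
  have comm : ∀ m, gr deg m ≤ commLeft m := gr_le
    (by simp [commLeft]) (fun m k x _ z _ hx hz => by
      simp only [commLeft, LinearMap.mem_eqLocus, LinearMap.smul_apply, LinearMap.mulLeft_apply,
        LinearMap.mulRight_apply] at *
      rw [mul_assoc, hz, mul_smul_comm, ← mul_assoc, hx, smul_mul_assoc, smul_smul,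
        ← zpow_add₀ (by norm_num), ← add_mul, add_comm k, mul_assoc])
    (fun i => gen_comm i n hy)
  exact comm m hx

/-- The free graded commutative algebra with zero differential. -/
abbrev zeroDiff : CDGA where
  carrier := FreeGC deg
  grading := gr deg
  spanning := iSup_gr deg
  indep := CDGA.indep_of_proj (grProj deg) (fun _ _ => grProj_self deg)
    (fun _ _ h _ => grProj_of_ne deg h)
  one_mem := SetLike.one_mem_graded _
  mul_mem hx hy := SetLike.mul_mem_graded hx hy
  gcomm := gcomm
  d := 0
  d_mem _ := Submodule.zero_mem _
  d_sq _ := rfl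
  leibniz _ _ := by simp

instance : GradedAlgebra (gr deg) := (zeroDiff deg).isInternal.gradedAlgebra

variable (δ : ∀ i, gr deg (deg i + 1))

/-- The graph `x + ε D x` of the derivation `D` with values `δ` on the generators. -/
def derGraph : FreeGC deg →ₐ[ℚ] SkewExt (zeroDiff deg).sgn :=
  lift (fun i => SkewExt.mk _ (gen deg i, δ i)) fun i j => by
    ext
    · exact gen_mul_gen deg i j
    · have hij := gcomm (gen_mem_gr deg i) (δ j).2
      have hji := gcomm (δ i).2 (gen_mem_gr deg j)
      simp only [SkewExt.eps_mul, map_smul, SkewExt.fst_mk, SkewExt.eps_mk]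
      rw [(zeroDiff deg).sgn_of_mem (gen_mem_gr deg i),
        (zeroDiff deg).sgn_of_mem (gen_mem_gr deg j), smul_mul_assoc, smul_mul_assoc, hij, hji,
        smul_add, smul_smul, smul_smul, add_comm]
      have hsq (k : ℤ) : (-1 : ℚ) ^ k * (-1) ^ k = 1 := by rw [← mul_zpow]; norm_num
      congr 2
      · rw [add_mul, one_mul, zpow_add₀ (by norm_num)]
      · rw [mul_add, mul_one, zpow_add₀ (by norm_num), mul_left_comm, hsq, mul_one]

/-- The derivation with values `δ` on the generators. -/
def der : FreeGC deg →ₗ[ℚ] FreeGC deg := SkewExt.eps ∘ₗ (derGraph deg δ).toLinearMap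

@[simp]
theorem der_gen (i : I) : der deg δ (gen deg i) = δ i :=
  congrArg SkewExt.eps (lift_gen deg _ _ i)

@[simp]
theorem der_one : der deg δ 1 = 0 :=
  congrArg SkewExt.eps (map_one (derGraph deg δ))

theorem fst_derGraph (x : FreeGC deg) : (derGraph deg δ x).fst = x := by
  have h : (TrivSqZeroExt.fstHom ℚ _ _).comp (derGraph deg δ) = AlgHom.id ℚ (FreeGC deg) :=
    algHom_ext fun i => congrArg TrivSqZeroExt.fst (lift_gen deg _ _ i)
  exact DFunLike.congr_fun h x

theorem leibniz {n : ℤ} {x : FreeGC deg} (hx : x ∈ gr deg n) (y : FreeGC deg) :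
    der deg δ (x * y) = der deg δ x * y + (-1 : ℚ) ^ n • (x * der deg δ y) := by
  change SkewExt.eps (derGraph deg δ (x * y)) = _
  rw [map_mul, SkewExt.eps_mul, fst_derGraph, fst_derGraph, (zeroDiff deg).sgn_of_mem hx,
    smul_mul_assoc, add_comm]
  rfl

theorem der_mem {n : ℤ} {x : FreeGC deg} (hx : x ∈ gr deg n) : der deg δ x ∈ gr deg (n + 1) := by
  refine gr_le (W := fun n => (gr deg (n + 1)).comap (der deg δ)) ?_ ?_ ?_ n hx
  · simp
  · intro i j x hx y hy (hdx : der deg δ x ∈ gr deg (i + 1)) (hdy : der deg δ y ∈ gr deg (j + 1))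
    rw [Submodule.mem_comap, leibniz deg δ hx]
    refine Submodule.add_mem _ ?_ (Submodule.smul_mem _ _ ?_)
    · simpa only [add_right_comm] using SetLike.mul_mem_graded hdx hy
    · simpa only [add_assoc] using SetLike.mul_mem_graded hx hdy
  · simp

theorem der_der (hδ : ∀ i, der deg δ (δ i) = 0) (x : FreeGC deg) :
    der deg δ (der deg δ x) = 0 := by
  have hle := gr_le (W := fun _ => LinearMap.ker (der deg δ ∘ₗ der deg δ))
    (by simp)
    (fun i j x hx y _ hdx hdy => by
      simp only [LinearMap.mem_ker, LinearMap.comp_apply] at *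
      rw [leibniz deg δ hx, map_add, map_smul, leibniz deg δ (der_mem deg δ hx),
        leibniz deg δ hx, hdx, hdy, mul_zero, smul_zero, add_zero, zero_mul, zero_add,
        zpow_add₀ (by norm_num), zpow_one, mul_neg_one]
      module)
    (fun i => by simp [hδ])
  exact iSup_le hle (iSup_gr deg ▸ Submodule.mem_top)

/-- The free graded commutative algebra with the differential given by `δ` on the generators. -/
abbrev cdga (hδ : ∀ i, der deg δ (δ i) = 0) : CDGA where
  __ := zeroDiff deg
  d := der deg δ
  d_mem := der_mem deg δ
  d_sq := der_der deg δ hδ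
  leibniz := leibniz deg δ

variable {δ} in
theorem der_congr {δ' : ∀ i, gr deg (deg i + 1)} {s : Set I} (h : ∀ i ∈ s, δ i = δ' i)
    {x : FreeGC deg} (hx : x ∈ Algebra.adjoin ℚ (gen deg '' s)) : der deg δ x = der deg δ' x := by
  have hs : Algebra.adjoin ℚ (gen deg '' s) ≤
      AlgHom.equalizer (derGraph deg δ) (derGraph deg δ') :=
    Algebra.adjoin_le <| Set.forall_mem_image.2 fun i hi => by
      simp [derGraph, h i hi]
  exact congrArg SkewExt.eps (hs hx)

variable (A : CDGA) (α : ∀ i, A.grading (deg i))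

/-- The morphism to a cdga with values `α` on the generators. -/
def liftA : FreeGC deg →ₐ[ℚ] A.carrier :=
  lift (fun i => (α i : A.carrier)) fun i j => A.gcomm (α i).2 (α j).2

@[simp]
theorem liftA_gen (i : I) : liftA deg A α (gen deg i) = α i := lift_gen deg _ _ i

theorem liftA_mem {n : ℤ} {x : FreeGC deg} (hx : x ∈ gr deg n) :
    liftA deg A α x ∈ A.grading n :=
  gr_le (W := fun n => (A.grading n).comap (liftA deg A α).toLinearMap)
    (by simpa using A.one_mem)
    (fun i j x _ y _ hx hy => by
      simpa only [Submodule.mem_comap, AlgHom.toLinearMap_apply, map_mul] using A.mul_mem hx hy)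
    (fun i => by simp) n hx

variable {A} in
theorem liftA_congr {α α' : ∀ i, A.grading (deg i)} {s : Set I} (h : ∀ i ∈ s, α i = α' i)
    {x : FreeGC deg} (hx : x ∈ Algebra.adjoin ℚ (gen deg '' s)) :
    liftA deg A α x = liftA deg A α' x :=
  have hs : Algebra.adjoin ℚ (gen deg '' s) ≤
      AlgHom.equalizer (liftA deg A α) (liftA deg A α') :=
    Algebra.adjoin_le <| Set.forall_mem_image.2 fun i hi => by
      simp [h i hi]
  hs hx

end FreeGC

end FreeGC

/-! ### Minimal Sullivan algebras generated by part of the generators -/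

theorem exists_mem_adjoin_of_monotone {R A : Type*} [CommRing R] [Ring A] [Algebra R A]
    {s : ℕ → Set A} (hs : Monotone s) {x : A} (hx : x ∈ Algebra.adjoin R (⋃ r, s r)) :
    ∃ r, x ∈ Algebra.adjoin R (s r) := by
  rw [Algebra.adjoin_iUnion, ← SetLike.mem_coe, Subalgebra.coe_iSup_of_directed
    (Monotone.directed_le fun _ _ h => Algebra.adjoin_mono (hs h))] at hx
  exact Set.mem_iUnion.1 hx

namespace CDGA

variable (C : CDGA)

theorem d_mem_adjoin {s : Set C.carrier} (hs : ∀ x ∈ s, SetLike.IsHomogeneousElem C.grading x)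
    (hd : ∀ x ∈ s, C.d x ∈ Algebra.adjoin ℚ s) {x : C.carrier} (hx : x ∈ Algebra.adjoin ℚ s) :
    C.d x ∈ Algebra.adjoin ℚ s := by
  have hsgn : (Algebra.adjoin ℚ s).map C.sgn ≤ Algebra.adjoin ℚ s := by
    rw [AlgHom.map_adjoin]
    refine Algebra.adjoin_le (Set.forall_mem_image.2 fun x hx => ?_)
    obtain ⟨i, hi⟩ := hs x hx
    rw [C.sgn_of_mem hi]
    exact Subalgebra.smul_mem _ (Algebra.subset_adjoin hx) _
  induction hx using Algebra.adjoin_induction with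
  | mem x hx => exact hd x hx
  | algebraMap q =>
    rw [Algebra.algebraMap_eq_smul_one, map_smul, C.d_one, smul_zero]
    exact Subalgebra.zero_mem _
  | add x y _ _ hx hy => rw [map_add]; exact Subalgebra.add_mem _ hx hy
  | mul x y hx' hy' hx hy =>
    rw [C.d_mul]
    exact Subalgebra.add_mem _ (Subalgebra.mul_mem _ hx hy')
      (Subalgebra.mul_mem _ (hsgn ⟨x, hx', rfl⟩) hy)

/-- The largest candidate for the Sullivan filtration of a space `E` of generators. -/
def nilFilt (E : Submodule ℚ C.carrier) : ℕ → Submodule ℚ C.carrier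
  | 0 => E ⊓ LinearMap.ker C.d
  | r + 1 => E ⊓ (Subalgebra.toSubmodule (Algebra.adjoin ℚ
      (nilFilt E r : Set C.carrier))).comap C.d

theorem nilFilt_le (E : Submodule ℚ C.carrier) (r : ℕ) : C.nilFilt E r ≤ E := by
  cases r <;> exact inf_le_left

theorem nilFilt_mono (E : Submodule ℚ C.carrier) : Monotone (C.nilFilt E) := by
  refine monotone_nat_of_le_succ fun r => ?_
  induction r with
  | zero =>
    rintro x ⟨hx, hdx⟩
    refine ⟨hx, ?_⟩
    rw [SetLike.mem_coe, Submodule.mem_comap, LinearMap.mem_ker.1 hdx]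
    exact Submodule.zero_mem _
  | succ r ih => exact fun x hx => ⟨hx.1, Algebra.adjoin_mono ih hx.2⟩

theorem mem_iSup_nilFilt {E : Submodule ℚ C.carrier} {ι W : Type*} [Preorder W]
    [WellFoundedLT W] (rank : ι → W) {g : ι → C.carrier} (hg : ∀ i, g i ∈ E)
    (hd : ∀ i, C.d (g i) ∈ Algebra.adjoin ℚ (g '' {j | rank j < rank i})) (i : ι) :
    g i ∈ ⨆ r, C.nilFilt E r := by
  suffices h : ∃ r, g i ∈ C.nilFilt E r from Submodule.mem_iSup_of_mem h.choose h.choose_spec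
  induction i using (InvImage.wf rank (wellFounded_lt (α := W))).induction with
  | h i ih =>
  have hsub : g '' {j | rank j < rank i} ⊆ ⋃ r, (C.nilFilt E r : Set C.carrier) :=
    Set.image_subset_iff.2 fun j hj => Set.mem_iUnion.2 (ih j hj)
  obtain ⟨r, hr⟩ := exists_mem_adjoin_of_monotone (s := fun r => (C.nilFilt E r : Set C.carrier))
    (C.nilFilt_mono E) (Algebra.adjoin_mono hsub (hd i))
  exact ⟨r + 1, hg i, hr⟩

end CDGA

namespace FreeGC

variable {I : Type} (deg : I → ℤ)

section Subalgebra

variable (U : Set I)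

/-- The subalgebra generated by some of the generators. -/
def subgen : Subalgebra ℚ (FreeGC deg) := Algebra.adjoin ℚ (gen deg '' U)

/-- A generator, as an element of the subalgebra `subgen deg U`. -/
def genOf (i : U) : subgen deg U := ⟨gen deg i, Algebra.subset_adjoin ⟨i, i.2, rfl⟩⟩

theorem adjoin_sep_le_subgen (p : I → Prop) :
    Algebra.adjoin ℚ (gen deg '' {j ∈ U | p j}) ≤ subgen deg U :=
  Algebra.adjoin_mono (Set.image_mono (Set.sep_subset U p))

theorem mem_adjoin_genOf_iff (p : I → Prop) (x : subgen deg U) :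
    x ∈ Algebra.adjoin ℚ (genOf deg U '' {j | p j}) ↔
      (x : FreeGC deg) ∈ Algebra.adjoin ℚ (gen deg '' {j ∈ U | p j}) := by
  have h : gen deg '' {j ∈ U | p j} = (subgen deg U).val '' (genOf deg U '' {j | p j}) := by
    ext y
    constructor
    · rintro ⟨j, ⟨hj, hpj⟩, rfl⟩
      exact ⟨_, ⟨⟨j, hj⟩, hpj, rfl⟩, rfl⟩
    · rintro ⟨_, ⟨j, hpj, rfl⟩, rfl⟩
      exact ⟨j, ⟨j.2, hpj⟩, rfl⟩
  rw [h, ← AlgHom.map_adjoin]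
  exact ⟨fun hx => ⟨x, hx, rfl⟩, fun ⟨y, hy, hyx⟩ => (Subtype.ext hyx : y = x) ▸ hy⟩

theorem adjoin_range_genOf : Algebra.adjoin ℚ (Set.range (genOf deg U)) = ⊤ := by
  refine eq_top_iff.2 fun x _ => ?_
  have h := (mem_adjoin_genOf_iff deg U (fun _ => True) x).2 (by
    rw [Set.sep_true]
    exact x.2)
  simpa only [Set.ofPred_true, Set.image_univ] using h

/-- The span of the generators of degree `k`. -/
def spanGen (k : ℤ) : Submodule ℚ (subgen deg U) :=
  Submodule.span ℚ (genOf deg U '' {i | deg i = k})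

theorem genOf_mem_spanGen (i : U) : genOf deg U i ∈ spanGen deg U (deg i) :=
  Submodule.subset_span ⟨i, rfl, rfl⟩

theorem genOf_mem_iSup (i : U) : genOf deg U i ∈ ⨆ k, spanGen deg U k :=
  Submodule.mem_iSup_of_mem (deg i) (genOf_mem_spanGen deg U i)

theorem iSup_spanGen : (⨆ k, spanGen deg U k) = Submodule.span ℚ (Set.range (genOf deg U)) := by
  refine le_antisymm (iSup_le fun k => Submodule.span_mono (Set.image_subset_range _ _)) ?_
  exact Submodule.span_le.2 (Set.forall_mem_range.2 (genOf_mem_iSup deg U))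

theorem adjoin_iSup_spanGen :
    Algebra.adjoin ℚ ((⨆ k, spanGen deg U k : Submodule ℚ (subgen deg U)) : Set (subgen deg U)) =
      ⊤ := by
  rw [iSup_spanGen, Algebra.adjoin_span, adjoin_range_genOf]

theorem exists_algHom_genOf (B : CDGA) (β : ∀ i : U, B.grading (deg i)) :
    ∃ φ : subgen deg U →ₐ[ℚ] B.carrier, (∀ i, φ (genOf deg U i) = β i) ∧
      ∀ n, ∀ x : subgen deg U, (x : FreeGC deg) ∈ gr deg n → φ x ∈ B.grading n := by
  classical
  let α (i : I) : B.grading (deg i) := if h : i ∈ U then β ⟨i, h⟩ else 0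
  refine ⟨(liftA deg B α).comp (subgen deg U).val, fun i => ?_, fun n x => liftA_mem deg B α⟩
  exact (liftA_gen deg B α i).trans (congrArg Subtype.val (dif_pos i.2))

theorem existsUnique_extension (B : CDGA) (f : ∀ k : ℤ, spanGen deg U k →ₗ[ℚ] B.carrier)
    (hf : ∀ (k : ℤ) (v : spanGen deg U k), f k v ∈ B.grading k) :
    ∃! φ : subgen deg U →+* B.carrier,
      (∀ (q : ℚ) (x : subgen deg U), φ (q • x) = q • φ x) ∧
      (∀ i : ℤ, ∀ x : subgen deg U, (x : FreeGC deg) ∈ gr deg i → φ x ∈ B.grading i) ∧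
      ∀ (k : ℤ) (v : spanGen deg U k), φ v = f k v := by
  obtain ⟨φ, hφ, hφgr⟩ := exists_algHom_genOf deg U B fun i =>
    ⟨f (deg i) ⟨genOf deg U i, genOf_mem_spanGen deg U i⟩, hf _ _⟩
  refine ⟨φ.toRingHom, ⟨map_smul φ, hφgr, fun k v => ?_⟩, fun ψ ⟨hsmul, _, hψ⟩ => ?_⟩
  · have h : φ.toLinearMap ∘ₗ (spanGen deg U k).subtype = f k :=
      (Submodule.linearMap_eq_iff_of_eq_span _ _ rfl).2 fun ⟨_, i, hi, hx⟩ => by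
        subst hi hx
        exact hφ i
    exact DFunLike.congr_fun h v
  · have h : AlgHom.mk' ψ hsmul = φ :=
      AlgHom.ext_of_adjoin_eq_top (adjoin_range_genOf deg U) <| Set.forall_mem_range.2 fun i =>
        (hψ (deg i) ⟨_, genOf_mem_spanGen deg U i⟩).trans (hφ i).symm
    exact congrArg AlgHom.toRingHom h

end Subalgebra

variable (δ : ∀ i, gr deg (deg i + 1)) (hδ : ∀ i, der deg δ (δ i) = 0) {U : Set I}

section subCDGA

variable (hU : ∀ i ∈ U, (δ i : FreeGC deg) ∈ subgen deg U)

/-- The sub-cdga generated by some of the generators. -/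
def subCDGA : CDGA :=
  have hhom : ∀ x ∈ gen deg '' U, SetLike.IsHomogeneousElem (gr deg) x :=
    Set.forall_mem_image.2 fun i _ => ⟨deg i, gen_mem_gr deg i⟩
  (cdga deg δ hδ).sub (subgen deg U) (fun k _ hx => proj_mem_adjoin (gr deg) hhom hx k)
    fun _ hx => (cdga deg δ hδ).d_mem_adjoin hhom
      (Set.forall_mem_image.2 fun i hi => (der_gen deg δ i).symm ▸ hU i hi) hx

/-- The inclusion of the sub-cdga generated by some of the generators. -/
def subCDGAIncl : CDGA.Hom (subCDGA deg δ hδ hU) (cdga deg δ hδ) where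
  toFun := (subgen deg U).val.toRingHom
  map_smul _ _ := rfl
  map_grading _ _ h := h
  map_d _ := rfl

theorem subCDGA_d_genOf (i : U) :
    (subCDGA deg δ hδ hU).d (genOf deg U i) = (⟨δ i, hU i i.2⟩ : subgen deg U) :=
  Subtype.ext (der_gen deg δ i)

end subCDGA

variable {W : Type*} [Preorder W] [WellFoundedLT W] (rank : I → W)
  (hpos : ∀ i ∈ U, 1 ≤ deg i)
  (hrank : ∀ i ∈ U, (δ i : FreeGC deg) ∈ Algebra.adjoin ℚ (gen deg '' {j ∈ U | rank j < rank i}))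

/-- The Sullivan algebra on generators which can be attached one after the other. -/
def sullivan : SullivanAlgebra where
  toCDGA := subCDGA deg δ hδ fun i hi => adjoin_sep_le_subgen deg U _ (hrank i hi)
  V := spanGen deg U
  V_le k := by
    refine Submodule.span_le.2 ?_
    rintro _ ⟨i, rfl, rfl⟩
    exact gen_mem_gr deg i
  V_nonpos k hk := by
    refine Submodule.span_eq_bot.2 ?_
    rintro _ ⟨i, rfl, rfl⟩
    exact absurd (hpos i i.2) (not_le.2 (Int.lt_of_le_of_lt hk zero_lt_one))
  gen := adjoin_iSup_spanGen deg U
  free := existsUnique_extension deg U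
  filt := (subCDGA deg δ hδ _).nilFilt (⨆ k, spanGen deg U k)
  filt_le := (subCDGA deg δ hδ _).nilFilt_le _
  filt_mono := (subCDGA deg δ hδ _).nilFilt_mono _
  filt_exhausts := by
    let C := subCDGA deg δ hδ fun i hi => adjoin_sep_le_subgen deg U _ (hrank i hi)
    have key : ∀ i : U, genOf deg U i ∈ ⨆ r, C.nilFilt (⨆ k, spanGen deg U k) r :=
      C.mem_iSup_nilFilt (fun i : U => rank i) (E := ⨆ k, spanGen deg U k) (g := genOf deg U)
        (genOf_mem_iSup deg U)
        (fun i => Set.mem_of_eq_of_mem (subCDGA_d_genOf deg δ hδ _ i)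
          ((mem_adjoin_genOf_iff deg U (fun j => rank j < rank i) _).2 (hrank i i.2)))
    exact (iSup_spanGen deg U).le.trans (Submodule.span_le.2 (Set.forall_mem_range.2 key))
  d_filt_zero x hx := hx.2
  d_filt_succ r x hx := hx.2

/-- The Sullivan algebra is minimal if the degrees of the generators increase weakly with their
ranks. -/
def minimalSullivan (hdeg : ∀ i j, rank j < rank i → deg j ≤ deg i) : MinimalSullivanAlgebra where
  toSullivanAlgebra := sullivan deg δ hδ rank hpos hrank
  minimal := by
    let S := sullivan deg δ hδ rank hpos hrank
    have hV : S.Vtot = Submodule.span ℚ (Set.range (genOf deg U)) := iSup_spanGen deg U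
    suffices h : S.Vtot ≤ (S.wedge 2).comap S.d from fun x hx => h hx
    refine hV.le.trans (Submodule.span_le.2 (Set.forall_mem_range.2 fun i => ?_))
    have hmem := (mem_adjoin_genOf_iff deg U (fun j => rank j < rank i)
      ⟨δ i, adjoin_sep_le_subgen deg U _ (hrank i i.2)⟩).2 (hrank i i.2)
    have hdec := mem_decomposables_of_lt (𝒜 := S.grading) (g := genOf deg U)
      (deg := fun j : U => deg j) (U := {j | rank j < rank i})
      (x := (⟨δ i, adjoin_sep_le_subgen deg U _ (hrank i i.2)⟩ : subgen deg U))
      (fun j => gen_mem_gr deg j) (fun j _ => hpos j j.2)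
      (by linarith [hpos i i.2]) (fun j hj => Int.lt_add_one_of_le (hdeg i j hj)) hmem (δ i).2
    have hle : Submodule.span ℚ (genOf deg U '' {j | rank j < rank i}) ≤ S.Vtot :=
      (Submodule.span_mono (Set.image_subset_range _ _)).trans hV.ge
    have hmul := mul_le_mul' (pow_le_pow_left' hle 2) (le_refl (⊤ : Submodule ℚ S.carrier))
    have hd := subCDGA_d_genOf deg δ hδ (fun i hi => adjoin_sep_le_subgen deg U _ (hrank i hi)) i
    change S.d (genOf deg U i) ∈ S.Vtot ^ 2 * ⊤
    exact Set.mem_of_eq_of_mem hd (hmul hdec.2)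

end FreeGC

theorem exists_linearIndependent_mkQ.{u, v} {K : Type u} {V : Type v} [DivisionRing K]
    [AddCommGroup V] [Module K V] (Z B : Submodule K V) :
    ∃ (κ : Type v) (v : κ → Z), Function.Injective v ∧
      LinearIndependent K (fun i => B.mkQ (v i)) ∧
      Z ≤ B ⊔ Submodule.span K (Set.range fun i => (v i : V)) := by
  obtain ⟨κ, v, hv, hspan, hli⟩ := exists_linearIndependent' K fun z : Z => B.mkQ z
  refine ⟨κ, v, hv, hli, fun z hz => ?_⟩
  have h : B.mkQ z ∈ (Submodule.span K (Set.range fun i => (v i : V))).map B.mkQ := by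
    rw [Submodule.map_span, ← Set.range_comp]
    exact hspan.ge (Submodule.subset_span ⟨⟨z, hz⟩, rfl⟩)
  rwa [← Submodule.mem_comap, Submodule.comap_map_mkQ] at h

/-! ### Existence of minimal models -/

namespace CDGA

variable (A : CDGA)

/-- The stages of the construction of the minimal model of `A`: the generators of degree `n + 1`
are attached at the stages `(n, r)`. -/
abbrev Stage : Type := ℕ ×ₗ ℕ

/-- The degree of the generators attached at a stage. -/
def stageDeg (s : Stage) : ℤ := (ofLex s).1 + 1

/-- The labels of the potential generators of the minimal model of `A`. There are so many of them
that every stage can choose its generators among the labels which it contributes. -/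
abbrev Label : Type := Stage × A.carrier

/-- The degree of the generator with a given label. -/
def labelDeg (i : A.Label) : ℤ := stageDeg i.1

/-- The attaching data of a stage: the differentials of its generators and their images in `A`.
A label is used if one of them is nonzero. -/
abbrev StageData (s : Stage) : Type :=
  A.carrier → FreeGC.gr A.labelDeg (stageDeg s + 1) × A.grading (stageDeg s)

/-- The elements `(x, a)` of degree `n` of the mapping cone of a map to `A` such that `x` lies in
the subalgebra generated by `U`. -/
def coneChains (U : Set A.Label) (n : ℤ) : Submodule ℚ (FreeGC A.labelDeg × A.carrier) :=
  (Subalgebra.toSubmodule (FreeGC.subgen A.labelDeg U) ⊓ FreeGC.gr A.labelDeg (n + 1)).prod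
    (A.grading n)

variable {A}

/-- The attaching data of a generator as an element of the mapping cone. -/
def attach {s : Stage} (c : A.StageData s) (k : A.carrier) : FreeGC A.labelDeg × A.carrier :=
  ((c k).1, (c k).2)

section StageData

variable (T : ∀ s, A.StageData s)

/-- The derivation determined by attaching data. -/
def derOf : FreeGC A.labelDeg →ₗ[ℚ] FreeGC A.labelDeg :=
  FreeGC.der A.labelDeg fun i => (T i.1 i.2).1

/-- The morphism to `A` determined by attaching data. -/
def mapOf : FreeGC A.labelDeg →ₐ[ℚ] A.carrier :=
  FreeGC.liftA A.labelDeg A fun i => (T i.1 i.2).2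

/-- The differential of the mapping cone of `mapOf T`. -/
def coneD : FreeGC A.labelDeg × A.carrier →ₗ[ℚ] FreeGC A.labelDeg × A.carrier :=
  (derOf T ∘ₗ LinearMap.fst ℚ _ _).prod
    ((mapOf T).toLinearMap ∘ₗ LinearMap.fst ℚ _ _ - A.d ∘ₗ LinearMap.snd ℚ _ _)

theorem coneD_apply (x : FreeGC A.labelDeg) (a : A.carrier) :
    coneD T (x, a) = (derOf T x, mapOf T x - A.d a) := rfl

theorem coneD_gen (s : Stage) (k : A.carrier) :
    coneD T (FreeGC.gen A.labelDeg (s, k), 0) = attach (T s) k := by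
  rw [coneD_apply, map_zero, sub_zero]
  exact Prod.ext (FreeGC.der_gen A.labelDeg _ (s, k)) (FreeGC.liftA_gen A.labelDeg A _ (s, k))

/-- The labels of the generators of the minimal model. -/
def usedOf : Set A.Label := {i | T i.1 i.2 ≠ 0}

/-- The labels of the generators attached before a stage. -/
def usedBelow (s : Stage) : Set A.Label := {i ∈ usedOf T | i.1 < s}

/-- The subalgebra generated before a stage. -/
def below (s : Stage) : Subalgebra ℚ (FreeGC A.labelDeg) :=
  FreeGC.subgen A.labelDeg (usedBelow T s)

/-- The cocycles of the mapping cone which a stage has to kill. -/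
def relCocycles (s : Stage) : Submodule ℚ (FreeGC A.labelDeg × A.carrier) :=
  A.coneChains (usedBelow T s) (stageDeg s) ⊓ LinearMap.ker (coneD T)

/-- The coboundaries of the mapping cone which already exist before a stage. -/
def relCobounds (s : Stage) : Submodule ℚ (FreeGC A.labelDeg × A.carrier) :=
  (A.coneChains (usedBelow T s) (ofLex s).1).map (coneD T)

/-- The generators attached at the stage `s` form a basis of the relative cohomology. -/
structure IsStage (s : Stage) (c : A.StageData s) : Prop where
  mem : ∀ k, attach c k ∈ relCocycles T s
  indep : LinearIndependent ℚ fun k : {k | c k ≠ 0} => (relCobounds T s).mkQ (attach c k)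
  le_sup : relCocycles T s ≤ relCobounds T s ⊔ Submodule.span ℚ (Set.range (attach c))

variable {T} {T' : ∀ s, A.StageData s} {s : Stage}

theorem usedBelow_congr (h : ∀ t < s, T t = T' t) : usedBelow T s = usedBelow T' s :=
  Set.ext fun i => and_congr_left fun hi => by rw [usedOf, usedOf, Set.mem_ofPred_eq, h _ hi,
    Set.mem_ofPred_eq]

theorem coneD_congr (h : ∀ t < s, T t = T' t) {n : ℤ} {p : FreeGC A.labelDeg × A.carrier}
    (hp : p ∈ A.coneChains (usedBelow T s) n) : coneD T p = coneD T' p := by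
  have hder : derOf T p.1 = derOf T' p.1 :=
    FreeGC.der_congr A.labelDeg (fun i hi => by rw [h _ hi.2]) hp.1.1
  have hmap : mapOf T p.1 = mapOf T' p.1 :=
    FreeGC.liftA_congr A.labelDeg (fun i hi => by rw [h _ hi.2]) hp.1.1
  exact Prod.ext hder (congrArg (· - A.d p.2) hmap)

theorem relCocycles_congr (h : ∀ t < s, T t = T' t) : relCocycles T s = relCocycles T' s := by
  ext p
  rw [relCocycles, relCocycles, ← usedBelow_congr h]
  refine and_congr_right fun hp => ?_
  rw [SetLike.mem_coe, SetLike.mem_coe, LinearMap.mem_ker, LinearMap.mem_ker, coneD_congr h hp]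

theorem relCobounds_congr (h : ∀ t < s, T t = T' t) : relCobounds T s = relCobounds T' s := by
  ext p
  rw [relCobounds, relCobounds, ← usedBelow_congr h]
  exact exists_congr fun q => and_congr_right fun hq => by rw [coneD_congr h hq]

theorem IsStage.congr {c : A.StageData s} (h : ∀ t < s, T t = T' t) (hc : IsStage T s c) :
    IsStage T' s c where
  mem := relCocycles_congr h ▸ hc.mem
  indep := relCobounds_congr h ▸ hc.indep
  le_sup := relCobounds_congr h ▸ relCocycles_congr h ▸ hc.le_sup

variable (T)

theorem cardinalMk_prod_le [Nontrivial A.carrier] :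
    Cardinal.mk (FreeGC A.labelDeg × A.carrier) ≤ Cardinal.mk A.carrier := by
  have : Infinite A.carrier := Infinite.of_injective _ (algebraMap ℚ A.carrier).injective
  have : Countable Stage := inferInstanceAs (Countable (ℕ × ℕ))
  have hA := Cardinal.aleph0_le_mk A.carrier
  have mk_prod_le {J : Type} (hJ : Cardinal.mk J ≤ Cardinal.mk A.carrier) :
      Cardinal.mk (J × A.carrier) ≤ Cardinal.mk A.carrier := by
    rw [Cardinal.mk_prod, Cardinal.lift_id, Cardinal.lift_id]
    exact (Cardinal.mul_le_max_of_aleph0_le_right hA).trans (max_le hJ le_rfl)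
  exact mk_prod_le (FreeGC.cardinalMk_le A.labelDeg (mk_prod_le (Cardinal.mk_le_aleph0.trans hA)))

theorem exists_isStage [Nontrivial A.carrier] (s : Stage) : ∃ c, IsStage T s c := by
  obtain ⟨κ, v, hv, hli, hle⟩ := exists_linearIndependent_mkQ (relCocycles T s) (relCobounds T s)
  obtain ⟨e⟩ : Cardinal.mk κ ≤ Cardinal.mk A.carrier :=
    (Cardinal.mk_le_of_injective (Subtype.val_injective.comp hv)).trans cardinalMk_prod_le
  let c : A.StageData s := Function.extend e
    (fun i => (⟨(v i).1.1, (v i).2.1.1.2⟩, ⟨(v i).1.2, (v i).2.1.2⟩)) 0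
  have hc (i : κ) : attach c (e i) = v i := by
    simp only [attach, c, e.injective.extend_apply]
  have hc0 (k : A.carrier) (hk : k ∉ Set.range e) : c k = 0 := Function.extend_apply' _ _ _ hk
  refine ⟨c, fun k => ?_, ?_, hle.trans (sup_le_sup_left (Submodule.span_mono ?_) _)⟩
  · by_cases hk : k ∈ Set.range e
    · obtain ⟨i, rfl⟩ := hk
      exact Set.mem_of_eq_of_mem (hc i) (v i).2
    · have h : attach c k = 0 := by rw [attach, hc0 k hk]; rfl
      exact Set.mem_of_eq_of_mem h (Submodule.zero_mem _)
  · choose f hf using fun k : {k | c k ≠ 0} => not_imp_comm.1 (hc0 k) k.2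
    have hf' : Function.Injective f := fun k l h =>
      Subtype.ext ((hf k).symm.trans ((congrArg e h).trans (hf l)))
    have hcf : (fun k : {k | c k ≠ 0} => (relCobounds T s).mkQ (attach c k)) =
        (fun i => (relCobounds T s).mkQ (v i)) ∘ f :=
      funext fun k => congrArg _ ((congrArg (attach c) (hf k)).symm.trans (hc (f k)))
    exact hcf ▸ hli.comp f hf'
  · exact Set.range_subset_iff.2 fun i => ⟨e i, hc i⟩

end StageData

theorem exists_forall_isStage (A : CDGA) [Nontrivial A.carrier] :
    ∃ T : ∀ s, A.StageData s, ∀ s, IsStage T s (T s) :=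
  exists_forall_of_local wellFounded_lt (fun s T => exists_isStage T s)
    fun _ _ _ _ h hc => hc.congr h

end CDGA

namespace CDGA

variable {A : CDGA}

theorem labelDeg_pos (i : A.Label) : 1 ≤ A.labelDeg i := by
  rw [labelDeg, stageDeg]
  omega

theorem labelDeg_le_of_lt {i j : A.Label} (h : j.1 < i.1) : A.labelDeg j ≤ A.labelDeg i := by
  have h' : (ofLex j.1).1 ≤ (ofLex i.1).1 := (Prod.Lex.lt_iff.1 h).elim le_of_lt fun h => h.1.le
  rw [labelDeg, labelDeg, stageDeg, stageDeg]
  omega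

theorem coneChains_mono {U U' : Set A.Label} (h : U ⊆ U') (n : ℤ) :
    A.coneChains U n ≤ A.coneChains U' n :=
  Submodule.prod_mono (inf_le_inf_right _ (Algebra.adjoin_mono (Set.image_mono h))) le_rfl

variable (T : ∀ s, A.StageData s)

theorem usedBelow_mono : Monotone (usedBelow T) := fun _ _ h _ hi => ⟨hi.1, hi.2.trans_le h⟩

theorem exists_mem_below {n : ℕ} {U : Set A.Label} (hU : U ⊆ usedOf T)
    (hdeg : ∀ i ∈ U, A.labelDeg i ≤ n + 1) {x : FreeGC A.labelDeg}
    (hx : x ∈ FreeGC.subgen A.labelDeg U) : ∃ r, x ∈ below T (toLex (n, r)) := by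
  have hmono : Monotone fun r : ℕ => FreeGC.gen A.labelDeg '' usedBelow T (toLex (n, r)) :=
    fun _ _ h => Set.image_mono (usedBelow_mono T (Prod.Lex.le_iff.2 (Or.inr ⟨rfl, h⟩)))
  refine exists_mem_adjoin_of_monotone hmono (Algebra.adjoin_mono ?_ hx)
  rintro _ ⟨i, hi, rfl⟩
  refine Set.mem_iUnion.2 ⟨(ofLex i.1).2 + 1, i, ⟨hU hi, Prod.Lex.lt_iff.2 ?_⟩, rfl⟩
  have h := hdeg i hi
  rw [labelDeg, stageDeg] at h
  simp only [ofLex_toLex]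
  omega

theorem exists_mem_coneChains_usedBelow {n : ℕ} {p : FreeGC A.labelDeg × A.carrier}
    (hp : p ∈ A.coneChains (usedOf T) n) :
    ∃ r, p ∈ A.coneChains (usedBelow T (toLex (n, r))) n := by
  have hle : Submodule.span ℚ (FreeGC.gen A.labelDeg '' {i ∈ usedOf T | A.labelDeg i = n + 1}) ⊔
      decomposables ℚ (FreeGC.gen A.labelDeg) A.labelDeg (usedOf T) (n + 1) ≤
      (FreeGC.subgen A.labelDeg {i ∈ usedOf T | A.labelDeg i ≤ n + 1}).toSubmodule := by
    refine sup_le (Submodule.span_le.2 ?_) (inf_le_left.trans ?_)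
    · rintro _ ⟨i, hi, rfl⟩
      exact Algebra.subset_adjoin ⟨i, ⟨hi.1, hi.2.le⟩, rfl⟩
    · exact Algebra.adjoin_mono (Set.image_mono fun i hi => ⟨hi.1, hi.2.le⟩)
  have hx := mem_sup_decomposables (FreeGC.gen_mem_gr A.labelDeg) (fun i _ => labelDeg_pos i)
    (by omega) hp.1.1 hp.1.2
  obtain ⟨r, hr⟩ := exists_mem_below T (U := {i ∈ usedOf T | A.labelDeg i ≤ n + 1})
    (Set.sep_subset _ _) (fun i hi => hi.2) (hle hx)
  exact ⟨r, ⟨hr, hp.1.2⟩, hp.2⟩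

/-- The generators attached at a stage. -/
def stageGen (s : Stage) (k : {k | T s k ≠ 0}) : FreeGC A.labelDeg := FreeGC.gen A.labelDeg (s, k)

theorem span_stageGen_le (s : Stage) :
    Submodule.span ℚ (Set.range (stageGen T s)) ≤ FreeGC.gr A.labelDeg (stageDeg s) :=
  Submodule.span_le.2 (Set.range_subset_iff.2 fun k => FreeGC.gen_mem_gr A.labelDeg (s, k.1))

theorem mem_below_sup_span {n r : ℕ} {x : FreeGC A.labelDeg}
    (hx : x ∈ below T (toLex (n, r + 1))) (hxn : x ∈ FreeGC.gr A.labelDeg (n + 1)) :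
    x ∈ (below T (toLex (n, r))).toSubmodule ⊔
      Submodule.span ℚ (Set.range (stageGen T (toLex (n, r)))) := by
  set s : Stage := toLex (n, r) with hs
  have key := mem_sup_decomposables (FreeGC.gen_mem_gr A.labelDeg) (fun i _ => labelDeg_pos i)
    (by omega) hx hxn
  refine SetLike.le_def.1 (sup_le (Submodule.span_le.2 ?_) (inf_le_left.trans ?_)) key
  · rintro _ ⟨i, ⟨⟨hiU, hi⟩, -⟩, rfl⟩
    obtain hlt | heq : i.1 < s ∨ i.1 = s := by
      rw [← le_iff_lt_or_eq, hs, Prod.Lex.le_iff]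
      rw [Prod.Lex.lt_iff] at hi
      simp only [ofLex_toLex] at hi ⊢
      omega
    · exact Submodule.mem_sup_left (Algebra.subset_adjoin ⟨i, ⟨hiU, hlt⟩, rfl⟩)
    · refine Submodule.mem_sup_right (Submodule.subset_span ⟨⟨i.2, heq ▸ hiU⟩, ?_⟩)
      exact congrArg (FreeGC.gen A.labelDeg) (Prod.ext heq.symm rfl)
  · refine le_sup_of_le_left (Algebra.adjoin_mono (Set.image_mono ?_))
    rintro i ⟨⟨hiU, -⟩, hi⟩
    refine ⟨hiU, Prod.Lex.lt_iff.2 (Or.inl ?_)⟩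
    rw [labelDeg, stageDeg] at hi
    simp only [hs, ofLex_toLex]
    omega

section IsStage

variable {T} (hT : ∀ s, IsStage T s (T s))
include hT

theorem eq_zero_of_coneD_mem_relCobounds {s : Stage} {t : FreeGC A.labelDeg}
    (ht : t ∈ Submodule.span ℚ (Set.range (stageGen T s)))
    (h : coneD T (t, 0) ∈ relCobounds T s) : t = 0 := by
  let f := (relCobounds T s).mkQ ∘ₗ coneD T ∘ₗ LinearMap.inl ℚ _ _
  have hf : f ∘ stageGen T s =
      fun k : {k | T s k ≠ 0} => (relCobounds T s).mkQ (attach (T s) k) :=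
    funext fun k => congrArg _ (coneD_gen T s k)
  have hli : LinearIndependent ℚ (f ∘ stageGen T s) := hf ▸ (hT s).indep
  exact Submodule.disjoint_def.1 (Submodule.range_ker_disjoint hli) t ht
    ((Submodule.Quotient.mk_eq_zero _).2 h)

theorem mem_coneChains_usedBelow_of_succ {n r : ℕ} {p : FreeGC A.labelDeg × A.carrier}
    (hp : p ∈ A.coneChains (usedBelow T (toLex (n, r + 1))) n) (hd : coneD T p = 0) :
    p ∈ A.coneChains (usedBelow T (toLex (n, r))) n := by
  obtain ⟨x, b⟩ := p
  have hx : x ∈ below T (toLex (n, r + 1)) := hp.1.1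
  have hxn : x ∈ FreeGC.gr A.labelDeg (n + 1) := hp.1.2
  obtain ⟨y, hy, t, ht, rfl⟩ := Submodule.mem_sup.1 (mem_below_sup_span T hx hxn)
  have htn : t ∈ FreeGC.gr A.labelDeg (n + 1) := span_stageGen_le T _ ht
  have hyb : (y, b) ∈ A.coneChains (usedBelow T (toLex (n, r))) n :=
    ⟨⟨hy, (Submodule.add_mem_iff_left _ htn).1 hxn⟩, hp.2⟩
  have hdt : coneD T (t, 0) = coneD T (-(y, b)) := by
    rw [map_neg, eq_neg_iff_add_eq_zero, add_comm, ← map_add, Prod.mk_add_mk, add_zero]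
    exact hd
  have hmem : coneD T (t, 0) ∈ relCobounds T (toLex (n, r)) := by
    rw [hdt]
    exact Submodule.mem_map_of_mem (neg_mem hyb)
  have ht0 : t = 0 := eq_zero_of_coneD_mem_relCobounds hT ht hmem
  rw [ht0, add_zero]
  exact hyb

theorem mem_coneChains_usedBelow_zero {n : ℕ} {p : FreeGC A.labelDeg × A.carrier}
    (hp : p ∈ A.coneChains (usedOf T) n) (hd : coneD T p = 0) :
    p ∈ A.coneChains (usedBelow T (toLex (n, 0))) n := by
  obtain ⟨r, hr⟩ := exists_mem_coneChains_usedBelow T hp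
  induction r with
  | zero => exact hr
  | succ r ih => exact ih (mem_coneChains_usedBelow_of_succ hT hr hd)

theorem relCocycles_le (s : Stage) :
    relCocycles T s ≤ (A.coneChains (usedOf T) (ofLex s).1).map (coneD T) := by
  refine (hT s).le_sup.trans (sup_le ?_ (Submodule.span_le.2 (Set.range_subset_iff.2 fun k => ?_)))
  · exact Submodule.map_mono (coneChains_mono (Set.sep_subset _ _) _)
  · by_cases hk : T s k = 0
    · have h : attach (T s) k = 0 := by rw [attach, hk]; rfl
      exact Set.mem_of_eq_of_mem h (Submodule.zero_mem _)
    · exact ⟨(FreeGC.gen A.labelDeg (s, k), 0), ⟨⟨Algebra.subset_adjoin ⟨(s, k), hk, rfl⟩,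
        FreeGC.gen_mem_gr A.labelDeg (s, k)⟩, Submodule.zero_mem _⟩, coneD_gen T s k⟩

theorem mem_map_coneD_of_pos {m : ℕ} {p : FreeGC A.labelDeg × A.carrier}
    (hp : p ∈ A.coneChains (usedOf T) (m + 1)) (hd : coneD T p = 0) :
    p ∈ (A.coneChains (usedOf T) m).map (coneD T) := by
  have h0 := mem_coneChains_usedBelow_zero (n := m + 1) hT hp hd
  obtain ⟨r, hr⟩ := exists_mem_below T (n := m) (Set.sep_subset _ _) (fun i hi => by
    have h := Prod.Lex.lt_iff.1 hi.2
    rw [labelDeg, stageDeg]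
    simp only [ofLex_toLex] at h
    omega) h0.1.1
  exact relCocycles_le hT (toLex (m, r)) ⟨⟨⟨hr, hp.1.2⟩, hp.2⟩, hd⟩

theorem fst_eq_zero_of_coneD_eq_zero {p : FreeGC A.labelDeg × A.carrier}
    (hp : p ∈ A.coneChains (usedOf T) 0) (hd : coneD T p = 0) : p.1 = 0 := by
  have h0 := mem_coneChains_usedBelow_zero (n := 0) hT hp hd
  have hU : usedBelow T (toLex (0, 0)) = ∅ := Set.eq_empty_of_forall_notMem fun i hi => by
    have h := Prod.Lex.lt_iff.1 hi.2
    simp only [ofLex_toLex] at h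
    omega
  have h1 := h0.1.1
  rw [hU, FreeGC.subgen, Set.image_empty, Algebra.adjoin_empty] at h1
  obtain ⟨q, hq⟩ := Algebra.mem_bot.1 h1
  have hq0 : p.1 ∈ FreeGC.gr A.labelDeg 0 := hq ▸ SetLike.algebraMap_mem_graded _ q
  by_contra h
  exact zero_ne_one (DirectSum.degree_eq_of_mem_mem _ hq0 hp.1.2 h)

end IsStage

end CDGA

namespace CDGA

variable {A : CDGA} {T : ∀ s, A.StageData s}

theorem mem_map_coneD_of_fst_eq_zero (hneg : ∀ n < 0, A.cocycles n ≤ A.cobounds n)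
    (hzero : A.HZeroIsQ) {n : ℤ} (hn : n ≤ 0) {b : A.carrier} (hb : b ∈ A.cocycles n) :
    (0, b) ∈ (A.coneChains (usedOf T) (n - 1)).map (coneD T) := by
  obtain ⟨q, hq, hbq⟩ : ∃ q : ℚ, q • 1 ∈ FreeGC.gr A.labelDeg n ∧
      b - q • (1 : A.carrier) ∈ A.cobounds n := by
    obtain hn | rfl := hn.lt_or_eq
    · exact ⟨0, by simp, by simpa using hneg n hn hb⟩
    · obtain ⟨q, hq⟩ := hzero.1 b hb
      exact ⟨q, Submodule.smul_mem _ q (SetLike.GradedOne.one_mem), hq⟩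
  obtain ⟨c, hc, hcb⟩ := A.exists_d_eq_of_mem_cobounds hbq
  refine ⟨(q • 1, -c), ⟨⟨Subalgebra.smul_mem _ (Subalgebra.one_mem _) q, ?_⟩, neg_mem hc⟩, ?_⟩
  · rwa [sub_add_cancel]
  · rw [coneD_apply, map_smul, map_smul, map_neg, hcb, map_one (mapOf T), sub_neg_eq_add,
      add_sub_cancel]
    exact congrArg (·, b) ((congrArg (q • ·) (FreeGC.der_one A.labelDeg _)).trans (smul_zero q))

section IsStage

variable (hT : ∀ s, IsStage T s (T s))
include hT

theorem fst_eq_zero_of_coneD_eq_zero_of_nonpos (hone : (1 : A.carrier) ∉ A.cobounds 0) {n : ℤ}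
    (hn : n ≤ 0) {p : FreeGC A.labelDeg × A.carrier} (hp : p ∈ A.coneChains (usedOf T) n)
    (hd : coneD T p = 0) : p.1 = 0 := by
  obtain hn | rfl := hn.lt_or_eq
  · obtain ⟨q, hq⟩ := Submodule.mem_one.1 (mem_one_of_mem_adjoin (FreeGC.gen_mem_gr A.labelDeg)
      (fun i _ => labelDeg_pos i) (by omega) hp.1.1 hp.1.2)
    have hq0 : p.1 ∈ FreeGC.gr A.labelDeg 0 := hq ▸ SetLike.algebraMap_mem_graded _ q
    by_contra h
    obtain rfl : n = -1 := by
      linarith [DirectSum.degree_eq_of_mem_mem _ hq0 hp.1.2 h]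
    have hq1 : q ≠ 0 := fun hq1 => h (by rw [← hq, hq1, map_zero])
    have hd1 : A.d p.2 = q • 1 := by
      rw [← Algebra.algebraMap_eq_smul_one, ← (mapOf T).commutes q, hq]
      exact (sub_eq_zero.1 (congrArg Prod.snd hd)).symm
    refine hone ?_
    rw [← inv_smul_smul₀ hq1 (1 : A.carrier), ← hd1]
    exact Submodule.smul_mem _ _ (A.d_mem_cobounds hp.2)
  · exact fst_eq_zero_of_coneD_eq_zero hT hp hd

theorem mem_map_coneD (hneg : ∀ n < 0, A.cocycles n ≤ A.cobounds n) (hzero : A.HZeroIsQ) {n : ℤ}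
    {p : FreeGC A.labelDeg × A.carrier} (hp : p ∈ A.coneChains (usedOf T) n)
    (hd : coneD T p = 0) : p ∈ (A.coneChains (usedOf T) (n - 1)).map (coneD T) := by
  obtain hn | hn := le_or_gt n 0
  · obtain ⟨x, b⟩ := p
    obtain rfl : x = 0 := fst_eq_zero_of_coneD_eq_zero_of_nonpos hT hzero.2 hn hp hd
    refine mem_map_coneD_of_fst_eq_zero hneg hzero hn ⟨hp.2, LinearMap.mem_ker.2 ?_⟩
    have h : mapOf T 0 - A.d b = 0 := congrArg Prod.snd hd
    rwa [map_zero, zero_sub, neg_eq_zero] at h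
  · obtain ⟨m, rfl⟩ : ∃ m : ℕ, n = m + 1 := ⟨(n - 1).toNat, by omega⟩
    rw [add_sub_cancel_right]
    exact mem_map_coneD_of_pos hT hp hd

theorem derOf_diff (i : A.Label) : derOf T (T i.1 i.2).1 = 0 :=
  congrArg Prod.fst (LinearMap.mem_ker.1 ((hT i.1).mem i.2).2)

theorem mapOf_diff (i : A.Label) :
    mapOf T ((T i.1 i.2).1 : FreeGC A.labelDeg) = A.d (T i.1 i.2).2 :=
  sub_eq_zero.1 (congrArg Prod.snd (LinearMap.mem_ker.1 ((hT i.1).mem i.2).2))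

theorem mapOf_derOf (x : FreeGC A.labelDeg) : mapOf T (derOf T x) = A.d (mapOf T x) := by
  have hx : x ∈ Algebra.adjoin ℚ (Set.range (FreeGC.gen A.labelDeg)) :=
    (FreeGC.adjoin_range_gen A.labelDeg).ge Algebra.mem_top
  refine IsGraded.map_d_of_mem_adjoin (A := FreeGC.cdga A.labelDeg _ (derOf_diff hT))
    (f := mapOf T) (fun _ _ hx => FreeGC.liftA_mem A.labelDeg A _ hx)
    (Set.forall_mem_range.2 fun i => ?_) hx
  have hder : derOf T (FreeGC.gen A.labelDeg i) = (T i.1 i.2).1 := FreeGC.der_gen A.labelDeg _ i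
  have hmap : mapOf T (FreeGC.gen A.labelDeg i) = (T i.1 i.2).2 :=
    FreeGC.liftA_gen A.labelDeg A _ i
  exact (congrArg (mapOf T) hder).trans ((mapOf_diff hT i).trans (congrArg A.d hmap.symm))

/-- The minimal model determined by attaching data. -/
def minimalModel : MinimalSullivanAlgebra :=
  FreeGC.minimalSullivan A.labelDeg (fun i => (T i.1 i.2).1) (derOf_diff hT) (U := usedOf T)
    (fun i => i.1) (fun i _ => labelDeg_pos i) (fun i _ => ((hT i.1).mem i.2).1.1.1)
    fun _ _ => labelDeg_le_of_lt

/-- The morphism from the minimal model. -/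
def modelMap : Hom (minimalModel hT).toCDGA A :=
  (Hom.ofAlgHom (A := FreeGC.cdga A.labelDeg _ (derOf_diff hT)) (mapOf T)
    (fun _ _ hx => FreeGC.liftA_mem A.labelDeg A _ hx) (mapOf_derOf hT)).comp
    (FreeGC.subCDGAIncl A.labelDeg _ (derOf_diff hT) fun i _ =>
      FreeGC.adjoin_sep_le_subgen A.labelDeg _ _ ((hT i.1).mem i.2).1.1.1)

theorem quasiIso_modelMap (hneg : ∀ n < 0, A.cocycles n ≤ A.cobounds n) (hzero : A.HZeroIsQ) :
    QuasiIso (modelMap hT) := by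
  refine ⟨fun n x hx hfx => ?_, fun n a ha => ?_⟩
  · obtain ⟨b, hb, hbx⟩ := A.exists_d_eq_of_mem_cobounds hfx
    have hxb : (x.1, b) ∈ A.coneChains (usedOf T) (n - 1) :=
      ⟨⟨x.2, (sub_add_cancel n 1).symm ▸ hx.1⟩, hb⟩
    have hdx : derOf T x.1 = 0 := congrArg Subtype.val hx.2
    have hmx : mapOf T x.1 = A.d b := hbx.symm
    have hd : coneD T (x.1, b) = 0 := Prod.ext hdx (sub_eq_zero.2 hmx)
    obtain ⟨⟨w, c⟩, ⟨⟨hw, hwn⟩, -⟩, h⟩ := mem_map_coneD hT hneg hzero hxb hd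
    have hwx : (minimalModel hT).d ⟨w, hw⟩ = x := Subtype.ext (congrArg Prod.fst h)
    rw [sub_add_cancel] at hwn
    exact hwx ▸ (minimalModel hT).d_mem_cobounds hwn
  · have hd : coneD T (0, a) = 0 := by
      rw [coneD_apply, map_zero, map_zero, LinearMap.mem_ker.1 ha.2, sub_zero, Prod.mk_zero_zero]
    obtain ⟨⟨w, c⟩, ⟨⟨hw, hwn⟩, hc⟩, h⟩ :=
      mem_map_coneD hT hneg hzero ⟨⟨zero_mem _, zero_mem _⟩, ha.1⟩ hd
    rw [sub_add_cancel] at hwn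
    refine ⟨⟨w, hw⟩, ⟨hwn, Subtype.ext (congrArg Prod.fst h)⟩, ?_⟩
    have ha' : mapOf T w - A.d c = a := congrArg Prod.snd h
    have hac : a - mapOf T w = A.d (-c) := by rw [map_neg, ← ha', sub_sub_cancel_left]
    exact Set.mem_of_eq_of_mem hac (A.d_mem_cobounds (neg_mem hc))

end IsStage

theorem exists_minimalModel (hneg : ∀ n < 0, A.cocycles n ≤ A.cobounds n) (hzero : A.HZeroIsQ) :
    ∃ (S : MinimalSullivanAlgebra) (φ : Hom S.toCDGA A), QuasiIso φ := by
  have : Nontrivial A.carrier := ⟨0, 1, fun h => hzero.2 (h ▸ Submodule.zero_mem _)⟩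
  obtain ⟨T, hT⟩ := A.exists_forall_isStage
  exact ⟨minimalModel hT, modelMap hT, quasiIso_modelMap hT hneg hzero⟩

end CDGA

section PathConnected

/-! ### Degree zero cohomology of a path connected space -/

namespace SSimplex

instance : Unique (SSimplex 0) where
  default := ⟨fun _ => 1, fun _ => zero_le_one, by simp⟩
  uniq f := by
    apply Subtype.ext
    funext i
    have h := f.2.2
    rw [Fin.sum_univ_one] at h
    exact (congrArg f.1 (Fin.fin_one_eq_zero i)).trans h

theorem face_default_one (i : Fin 2) :
    (face i (default : SSimplex 0)).1 1 = if i = 0 then 1 else 0 := by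
  have h : (default : SSimplex 0).1 0 = 1 := rfl
  change (∑ k : Fin 1, if i.succAbove k = 1 then (default : SSimplex 0).1 k else 0) = _
  rw [Fin.sum_univ_one, h]
  fin_cases i <;> simp

end SSimplex

variable {X : Type} [TopologicalSpace X]

theorem eq_of_mem_scocycles_zero [PathConnectedSpace X] {f : scochain X 0}
    (hf : f ∈ scocycles X 0) (σ τ : SingularSimplex X 0) : f σ = f τ := by
  obtain ⟨γ⟩ := PathConnectedSpace.joined (σ default) (τ default)
  have hc : Continuous fun x : SSimplex 1 => x.1 1 :=
    (continuous_apply 1).comp continuous_subtype_val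
  let s : SingularSimplex X 1 := ⟨fun x => γ.extend (x.1 1), γ.continuous_extend.comp hc⟩
  have h0 : s.comp (SSimplex.face 0) = τ := by
    ext x
    rw [Unique.eq_default x]
    change γ.extend _ = _
    rw [SSimplex.face_default_one, if_pos rfl, Path.extend_one]
  have h1 : s.comp (SSimplex.face 1) = σ := by
    ext x
    rw [Unique.eq_default x]
    change γ.extend _ = _
    rw [SSimplex.face_default_one, if_neg (by decide), Path.extend_zero]
  have h := congrFun (LinearMap.mem_ker.1 hf) s
  change ∑ i : Fin 2, (-1 : ℚ) ^ (i : ℕ) * f (s.comp (SSimplex.face i)) = 0 at h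
  rw [Fin.sum_univ_two, h0, h1] at h
  simp only [Fin.val_zero, pow_zero, one_mul, Fin.val_one, pow_one, neg_one_mul] at h
  linarith

theorem one_mem_scocycles_zero : (fun _ => 1 : scochain X 0) ∈ scocycles X 0 := by
  refine LinearMap.mem_ker.2 (funext fun s => ?_)
  change ∑ i : Fin 2, (-1 : ℚ) ^ (i : ℕ) * 1 = 0
  rw [Fin.sum_univ_two]
  simp

theorem finrank_singCoh_zero [PathConnectedSpace X] : Module.finrank ℚ (SingCoh X 0) = 1 := by
  have hx : Nonempty (SingularSimplex X 0) := ⟨ContinuousMap.const _ (Nonempty.some inferInstance)⟩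
  obtain ⟨σ⟩ := hx
  refine finrank_eq_one (Submodule.Quotient.mk ⟨_, one_mem_scocycles_zero⟩) ?_ ?_
  · intro h
    have h' := (Submodule.Quotient.mk_eq_zero _).1 h
    have h2 : (fun _ => 1 : scochain X 0) = 0 := (Submodule.mem_bot ℚ).1 h'
    exact one_ne_zero (congrFun h2 σ)
  · intro w
    obtain ⟨⟨f, hf⟩, rfl⟩ := Submodule.Quotient.mk_surjective _ w
    refine ⟨f σ, ?_⟩
    refine congrArg Submodule.Quotient.mk (Subtype.ext (funext fun τ => ?_))
    change f σ * 1 = f τ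
    rw [mul_one, eq_of_mem_scocycles_zero hf σ τ]

namespace CDGA

theorem hZeroIsQ_of_isAPLModelOf [PathConnectedSpace X] {A : CDGA} (hA : IsAPLModelOf A X) :
    A.HZeroIsQ := by
  obtain ⟨e⟩ := hA.2 0
  have hrank : Module.finrank ℚ (A.H 0) = 1 := e.finrank_eq.trans finrank_singCoh_zero
  let B := (A.cobounds 0).comap (A.cocycles 0).subtype
  let u : A.cocycles 0 := ⟨1, A.one_mem, A.d_one⟩
  have hu : (1 : A.carrier) ∉ A.cobounds 0 := fun h => by
    have h0 : A.cobounds 0 = ⊥ := (Submodule.eq_bot_iff _).2 fun x hx => by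
      obtain ⟨y, hy, rfl⟩ := A.exists_d_eq_of_mem_cobounds hx
      rw [hA.1 _ (by norm_num), Submodule.mem_bot] at hy
      rw [hy, map_zero]
    rw [h0, Submodule.mem_bot] at h
    have : Subsingleton A.carrier := subsingleton_of_zero_eq_one h.symm
    have : Subsingleton (A.H 0) := (Submodule.Quotient.mk_surjective _).subsingleton
    exact zero_ne_one (Module.finrank_zero_of_subsingleton.symm.trans hrank)
  refine ⟨fun a ha => ?_, hu⟩
  obtain ⟨q, hq⟩ := exists_smul_eq_of_finrank_eq_one hrank
    (fun h => hu ((Submodule.Quotient.mk_eq_zero B (x := u)).1 h)) (B.mkQ ⟨a, ha⟩)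
  exact ⟨q, (Submodule.Quotient.eq B).1 hq.symm⟩

end CDGA

end PathConnected

theorem statement_0_general (A : CDGA) (hneg : ∀ n < 0, A.cocycles n ≤ A.cobounds n)
    (hzero : A.HZeroIsQ) :
    (∃ (S : MinimalSullivanAlgebra) (φ : CDGA.Hom S.toCDGA A), CDGA.QuasiIso φ) ∧
    (∀ (S T : MinimalSullivanAlgebra) (φ : CDGA.Hom S.toCDGA A)
        (ψ : CDGA.Hom T.toCDGA A), CDGA.QuasiIso φ → CDGA.QuasiIso ψ →
        ∃ χ : CDGA.Hom T.toCDGA S.toCDGA,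
          CDGA.IsIso χ ∧ CDGA.Homotopic (φ.comp χ) ψ) :=
  ⟨CDGA.exists_minimalModel hneg hzero, CDGA.exists_isIso_homotopic⟩

/-! ## STATEMENT 0

For every path connected topological space `X` there exists a quasi-isomorphism
`φ : (∧V,d) → A_PL(X)` from a minimal Sullivan algebra; and if
`ψ : (∧W,d) → A_PL(X)` is a second quasi-isomorphism from a minimal Sullivan
algebra, then there is a cdga isomorphism `χ : (∧W,d) → (∧V,d)` such that
`φ∘χ` is homotopic to `ψ`.

Here `A_PL(X)` is represented by a cdga `A` whose cohomology is the rational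
singular cohomology of `X` (the property of `A_PL(X)` relevant here). -/
theorem statement_0 (X : Type) [TopologicalSpace X] [PathConnectedSpace X]
    (A : CDGA) (hA : IsAPLModelOf A X) :
    (∃ (S : MinimalSullivanAlgebra) (φ : CDGA.Hom S.toCDGA A), CDGA.QuasiIso φ) ∧
    (∀ (S T : MinimalSullivanAlgebra) (φ : CDGA.Hom S.toCDGA A)
        (ψ : CDGA.Hom T.toCDGA A), CDGA.QuasiIso φ → CDGA.QuasiIso ψ →
        ∃ χ : CDGA.Hom T.toCDGA S.toCDGA,
          CDGA.IsIso χ ∧ CDGA.Homotopic (φ.comp χ) ψ) := statement_0_general A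
  (fun n hn => inf_le_left.trans ((hA.1 n hn).trans_le bot_le))
  (CDGA.hZeroIsQ_of_isAPLModelOf hA)
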